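/- arXiv:1112.3800 — 5 statements merged into one kernel-verified Lean document; each statement's English description precedes it below -/
import Mathlib

section
/- Let n be a natural number and let f : ℝⁿ → ℝ be a function of class C^∞ on all of ℝⁿ such that there exist real polynomials p, q in n variables with q ≠ 0 and q(x)·f(x) = p(x) for every x ∈ ℝⁿ. Then f is a regular function: there exist real polynomials p', q' in n variables such that q'(x) ≠ 0 for every x ∈ ℝⁿ and f(x) = p'(x)/q'(x) for every x ∈ ℝⁿ. -/
open MvPolynomial

open scoped Topology in
theorem aux_univ (N : ℕ) (P : Polynomial ℝ)
    (h : (fun t : ℝ => P.eval t) =o[𝓝[≠] (0:ℝ)] fun t : ℝ => t ^ N) :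
    Polynomial.X ^ (N + 1) ∣ P := by
  induction N generalizing P with
  | zero =>
    have h1 : Filter.Tendsto (fun t : ℝ => P.eval t) (𝓝[≠] (0:ℝ)) (𝓝 0) := by
      simpa [Asymptotics.isLittleO_one_iff] using h
    have h2 : Filter.Tendsto (fun t : ℝ => P.eval t) (𝓝[≠] (0:ℝ)) (𝓝 (P.eval 0)) :=
      (P.continuous.tendsto 0).mono_left nhdsWithin_le_nhds
    have h3 := tendsto_nhds_unique h2 h1
    simpa [Polynomial.X_dvd_iff, Polynomial.coeff_zero_eq_eval_zero] using h3
  | succ N ih =>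
    have h1 : Polynomial.X ^ (N + 1) ∣ P := ih P (h.trans_isBigO (by
      refine Asymptotics.IsBigO.of_bound 1 ?_
      have : ∀ᶠ t : ℝ in 𝓝[≠] 0, t ∈ Metric.ball (0:ℝ) 1 :=
        nhdsWithin_le_nhds (Metric.ball_mem_nhds _ one_pos)
      filter_upwards [this] with t ht
      have ht' : |t| ≤ 1 := by simpa using (mem_ball_zero_iff.1 ht).le
      simp only [norm_pow, Real.norm_eq_abs, one_mul]
      exact pow_le_pow_of_le_one (abs_nonneg _) ht' (Nat.le_succ _)))
    obtain ⟨R, rfl⟩ := (dvd_pow_self Polynomial.X (Nat.succ_ne_zero N)).trans h1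
    have h2 : Polynomial.X ^ (N + 1) ∣ R := by
      apply ih
      rw [Asymptotics.isLittleO_iff] at h ⊢
      intro c hc
      filter_upwards [h hc, self_mem_nhdsWithin] with t ht ht0
      have ht0 : 0 < |t| := abs_pos.2 ht0
      simp only [Polynomial.eval_mul, Polynomial.eval_X, norm_mul, norm_pow, Real.norm_eq_abs] at ht ⊢
      rw [pow_succ] at ht
      refine le_of_mul_le_mul_left ?_ ht0
      linarith
    rw [pow_succ']
    exact mul_dvd_mul_left _ h2

theorem aux_coeff {n : ℕ} (x : Fin n → ℝ) (P : MvPolynomial (Fin n) ℝ) (j : ℕ) :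
    (aeval (fun i => Polynomial.C (x i) * Polynomial.X) P : Polynomial ℝ).coeff j
      = eval x (homogeneousComponent j P) := by
  induction P using MvPolynomial.induction_on' with
  | monomial u a =>
    have hm : (monomial u a : MvPolynomial (Fin n) ℝ) ∈ homogeneousSubmodule (Fin n) ℝ u.degree :=
      isHomogeneous_monomial a rfl
    rw [homogeneousComponent_of_mem hm, aeval_monomial]
    rw [Finsupp.prod_fintype _ _ (fun i => pow_zero _)]
    simp only [mul_pow, Finset.prod_mul_distrib,
      Finset.prod_pow_eq_pow_sum]
    have : ∑ i, u i = u.degree := by simp [Finsupp.degree_eq_sum]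
    rw [this]
    simp only [← Polynomial.C_pow, ← map_prod, Polynomial.algebraMap_eq]
    rw [← mul_assoc, ← Polynomial.C_mul, Polynomial.coeff_C_mul_X_pow]
    split_ifs with h1
    · simp [eval_monomial, Finsupp.prod_fintype]
    · simp
  | add p q hp hq => simp [hp, hq]

open scoped Topology in
theorem aux_mem {n : ℕ} (N : ℕ) (P : MvPolynomial (Fin n) ℝ)
    (h : ∀ x : Fin n → ℝ, (fun t : ℝ => eval (t • x) P) =o[𝓝[≠] (0:ℝ)] fun t : ℝ => t ^ N) :
    P ∈ idealOfVars (Fin n) ℝ ^ (N + 1) := by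
  rw [mem_pow_idealOfVars_iff']
  intro d hd
  have h0 : homogeneousComponent d.degree P = 0 := by
    apply MvPolynomial.funext
    intro x
    rw [← aux_coeff, map_zero]
    refine Polynomial.X_pow_dvd_iff.1 (aux_univ N _ ?_) _ hd
    refine (h x).congr_left fun t => ?_
    clear h
    induction P using MvPolynomial.induction_on with
    | C a => simp
    | add p q hp hq => simp [hp, hq]
    | mul_X p i hp => 
      rw [map_mul, map_mul, Polynomial.eval_mul, hp, aeval_X, eval_X, Polynomial.eval_mul,
        Polynomial.eval_C, Polynomial.eval_X, Pi.smul_apply, smul_eq_mul, mul_comm t]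
  have := congrArg (coeff d) h0
  simpa [coeff_homogeneousComponent] using this

theorem aux_diag {n k : ℕ} (M : ContinuousMultilinearMap ℝ (fun _ : Fin k => (Fin n → ℝ)) ℝ) :
    ∃ T : MvPolynomial (Fin n) ℝ, ∀ y, eval y T = M fun _ => y := by
  refine ⟨∑ r : Fin k → Fin n, C (M fun i => Pi.single (r i) 1) * ∏ i, X (r i), fun y => ?_⟩
  have hy : y = ∑ j, y j • (Pi.single j (1:ℝ) : Fin n → ℝ) := by
    ext i; simp [Finset.sum_apply, Pi.single_apply]
  conv_rhs => rw [hy]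
  rw [M.map_sum]
  simp [M.map_smul_univ, mul_comm]

open scoped Topology in
theorem aux_taylor {n : ℕ} (f : (Fin n → ℝ) → ℝ) (hf : ContDiff ℝ (⊤ : ℕ∞) f) (N : ℕ) :
    ∃ T : MvPolynomial (Fin n) ℝ, ∀ x : Fin n → ℝ,
      (fun t : ℝ => f (t • x) - eval (t • x) T) =o[𝓝 (0:ℝ)] fun t : ℝ => t ^ N := by
  choose T hT using fun k : ℕ => aux_diag (iteratedFDeriv ℝ k f 0)
  refine ⟨∑ k ∈ Finset.range (N + 1), C ((k.factorial : ℝ)⁻¹) * T k, fun x => ?_⟩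
  let L : ℝ →L[ℝ] (Fin n → ℝ) := (ContinuousLinearMap.id ℝ ℝ).smulRight x
  have hL : ∀ t, L t = t • x := fun t => by simp [L]
  have hfN : ContDiff ℝ N f := hf.of_le (by exact_mod_cast le_top)
  have h := taylor_isLittleO_univ (x₀ := 0) (hfN.comp L.contDiff)
  simp only [sub_zero] at h
  refine h.congr_left fun t => ?_
  rw [taylor_within_apply]
  simp only [Function.comp_apply, hL, map_sum, map_mul, eval_C, hT, sub_zero]
  congr 1
  refine Finset.sum_congr rfl fun k hk => ?_
  have hk' : (k : WithTop ℕ∞) ≤ N := by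
    exact_mod_cast Nat.lt_succ_iff.1 (Finset.mem_range.1 hk)
  rw [iteratedDerivWithin_univ, iteratedDeriv_eq_iteratedFDeriv,
    L.iteratedFDeriv_comp_right hfN 0 hk']
  have := (iteratedFDeriv ℝ k f 0).map_smul_univ (fun _ => t) (fun _ => x)
  simp only [ContinuousMultilinearMap.compContinuousLinearMap_apply, hL, one_smul, zero_smul,
    smul_eq_mul] at this ⊢
  rw [this]
  simp [mul_assoc]

theorem aux_dense {n : ℕ} (q : MvPolynomial (Fin n) ℝ) (hq : q ≠ 0) (g : (Fin n → ℝ) → ℝ)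
    (hg : Continuous g) (h : ∀ x, eval x q * g x = 0) (x : Fin n → ℝ) : g x = 0 := by
  by_contra hx
  have ho : IsOpen {y | g y ≠ 0} := isOpen_ne_fun hg continuous_const
  obtain ⟨ε, hε, hb⟩ := Metric.isOpen_iff.1 ho x hx
  apply hq
  refine MvPolynomial.funext_set (fun i => Metric.ball (x i) ε) (fun i => ?_) fun y hy => ?_
  · rw [Real.ball_eq_Ioo]; exact Set.Ioo_infinite (by linarith)
  · rw [← ball_pi x hε] at hy
    simpa [show g y ≠ 0 from hb hy] using h y

open scoped Topology in
theorem aux_zero {n : ℕ} (f : (Fin n → ℝ) → ℝ) (hf : ContDiff ℝ (⊤ : ℕ∞) f)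
    (p q : MvPolynomial (Fin n) ℝ) (hq : q ≠ 0) (h : ∀ x, eval x q * f x = eval x p) :
    ∃ a b : MvPolynomial (Fin n) ℝ, eval 0 a ≠ 0 ∧ ∀ x, eval x a * f x = eval x b := by
  have key : (Ideal.Quotient.mk (Ideal.span {q}) p) ∈
      (⨅ i : ℕ, idealOfVars (Fin n) ℝ ^ i • ⊤ :
        Submodule (MvPolynomial (Fin n) ℝ) (MvPolynomial (Fin n) ℝ ⧸ Ideal.span {q})) := by
    rw [Submodule.mem_iInf]
    intro N
    obtain ⟨T, hT⟩ := aux_taylor f hf N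
    have hm : p - q * T ∈ idealOfVars (Fin n) ℝ ^ (N + 1) := by
      refine aux_mem N _ fun x => ?_
      have hO : (fun t : ℝ => eval (t • x) q) =O[𝓝 (0:ℝ)] fun _ : ℝ => (1:ℝ) := by
        have hc : Continuous fun t : ℝ => eval (t • x) q :=
          (MvPolynomial.continuous_eval q).comp (by fun_prop)
        exact (hc.tendsto 0).isBigO_one ℝ
      have := (hO.mul_isLittleO (hT x)).mono (nhdsWithin_le_nhds (s := {0}ᶜ))
      simp only [one_mul] at this
      refine this.congr_left fun t => ?_
      rw [mul_sub, h]; simp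
    have hm' := Ideal.pow_le_pow_right (Nat.le_succ N) hm
    have he : Ideal.Quotient.mk (Ideal.span {q}) p =
        (p - q * T) • (1 : MvPolynomial (Fin n) ℝ ⧸ Ideal.span {q}) := by
      change Ideal.Quotient.mk _ p = Ideal.Quotient.mk _ ((p - q * T) * 1)
      rw [mul_one, Ideal.Quotient.eq, Ideal.mem_span_singleton]
      exact ⟨T, by ring⟩
    rw [he]
    exact Submodule.smul_mem_smul hm' trivial
  rw [Ideal.mem_iInf_smul_pow_eq_bot_iff] at key
  obtain ⟨⟨r, hr⟩, hrp⟩ := key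
  change Ideal.Quotient.mk _ (r * p) = Ideal.Quotient.mk _ p at hrp
  rw [eq_comm, Ideal.Quotient.eq, Ideal.mem_span_singleton] at hrp
  obtain ⟨b, hb⟩ := hrp
  have hr0 : eval 0 r = 0 := by
    have := (mem_pow_idealOfVars_iff' 1 r).1 (by simpa using hr) 0 (by simp)
    simpa [MvPolynomial.eval_zero, constantCoeff_eq] using this
  refine ⟨1 - r, b, by rw [map_sub, map_one, hr0]; norm_num, fun x => ?_⟩
  have := aux_dense q hq (fun x => eval x (1 - r) * f x - eval x b)
    (((MvPolynomial.continuous_eval _).mul hf.continuous).sub (MvPolynomial.continuous_eval _))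
    (fun y => by
      have := congrArg (eval y) hb
      simp only [map_sub, map_mul, map_one, ← h y] at this ⊢
      linarith) x
  linarith

theorem aux_pt {n : ℕ} (f : (Fin n → ℝ) → ℝ) (hf : ContDiff ℝ (⊤ : ℕ∞) f)
    (p q : MvPolynomial (Fin n) ℝ) (hq : q ≠ 0) (h : ∀ x, eval x q * f x = eval x p)
    (c : Fin n → ℝ) :
    ∃ a b : MvPolynomial (Fin n) ℝ, eval c a ≠ 0 ∧ ∀ x, eval x a * f x = eval x b := by
  let τ (d : Fin n → ℝ) (P : MvPolynomial (Fin n) ℝ) : MvPolynomial (Fin n) ℝ :=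
    bind₁ (fun i => X i + C (d i)) P
  have hτ : ∀ d P x, eval x (τ d P) = eval (x + d) P := by
    intro d P x
    simp only [τ]
    induction P using MvPolynomial.induction_on with
    | C a => simp
    | add p q hp hq => simp [hp, hq]
    | mul_X p i hp => simp [hp]
  obtain ⟨a, b, ha, hab⟩ := aux_zero (fun x => f (x + c)) (hf.comp (by fun_prop)) (τ c p) (τ c q)
    (fun h0 => hq (by
      apply MvPolynomial.funext
      intro x
      have := hτ c q (x - c)
      rw [h0] at this
      simpa using this.symm)) (fun x => by simp only [hτ, h])
  refine ⟨τ (-c) a, τ (-c) b, by rw [hτ]; simpa using ha, fun x => ?_⟩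
  have := hab (x + -c)
  rw [hτ, hτ]
  simpa using this

theorem infinitely_regulous_is_regular (n : ℕ) (f : (Fin n → ℝ) → ℝ)
    (hf : ContDiff ℝ (⊤ : ℕ∞) f)
    (hrat : ∃ p q : MvPolynomial (Fin n) ℝ, q ≠ 0 ∧
      ∀ x : Fin n → ℝ, eval x q * f x = eval x p) :
    ∃ p' q' : MvPolynomial (Fin n) ℝ,
      (∀ x : Fin n → ℝ, eval x q' ≠ 0) ∧
      (∀ x : Fin n → ℝ, f x = eval x p' / eval x q') := by
  obtain ⟨p, q, hq, h⟩ := hrat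
  let I : Ideal (MvPolynomial (Fin n) ℝ) :=
    { carrier := {a | ∃ b : MvPolynomial (Fin n) ℝ, ∀ x, eval x a * f x = eval x b}
      add_mem' := by
        rintro a a' ⟨b, hb⟩ ⟨b', hb'⟩
        exact ⟨b + b', fun x => by simp [add_mul, hb, hb']⟩
      zero_mem' := ⟨0, by simp⟩
      smul_mem' := by
        rintro c a ⟨b, hb⟩
        exact ⟨c * b, fun x => by simp [mul_assoc, hb]⟩ }
  obtain ⟨S, hS⟩ := (IsNoetherian.noetherian I : I.FG)
  have hSI : ∀ s ∈ S, s ∈ I := fun s hs => hS ▸ Submodule.subset_span hs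
  have hQ : ∑ s ∈ S, s * s ∈ I := Ideal.sum_mem _ fun s hs => I.mul_mem_left _ (hSI s hs)
  obtain ⟨b, hb⟩ := hQ
  have hne : ∀ x : Fin n → ℝ, eval x (∑ s ∈ S, s * s) ≠ 0 := by
    intro x h0
    obtain ⟨a, b, ha, hab⟩ := aux_pt f hf p q hq h x
    have haI : a ∈ I := ⟨b, hab⟩
    simp only [map_sum, map_mul] at h0
    rw [Finset.sum_eq_zero_iff_of_nonneg (fun s _ => mul_self_nonneg _)] at h0
    have hle : I ≤ RingHom.ker (eval x) := by
      rw [← hS]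
      refine Submodule.span_le.2 fun s hs => ?_
      simpa [RingHom.mem_ker] using h0 s hs
    exact ha (hle haI)
  refine ⟨b, _, hne, fun x => ?_⟩
  rw [eq_div_iff (hne x), mul_comm]
  exact hb x
end

section
/- Let n, k be natural numbers and let f : ℝⁿ → ℝ be a k-regulous function. Then there exists a finite partition ℝⁿ = S₁ ⊔ … ⊔ S_m into pairwise disjoint Zariski locally closed subsets such that the restriction of f to each S_i is regular: for each i there exist real polynomials p_i, q_i in n variables with q_i(x) ≠ 0 and f(x) = p_i(x)/q_i(x) for every x ∈ S_i. -/
open MvPolynomial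

/-- A function `f : ℝⁿ → ℝ` is `k`-regulous if it is of class `C^k` on all of `ℝⁿ` and
agrees with a rational function: there are polynomials `p`, `q` with `q ≠ 0` and
`q(x) * f(x) = p(x)` for every `x`. -/
def IsRegulous (n k : ℕ) (f : (Fin n → ℝ) → ℝ) : Prop :=
  ContDiff ℝ k f ∧ ∃ p q : MvPolynomial (Fin n) ℝ, q ≠ 0 ∧
    ∀ x : Fin n → ℝ, eval x q * f x = eval x p

/-- Base-`N` digit vectors are determined by the number they represent. -/
lemma digit_sum_inj {n N : ℕ} (hN : 1 < N) (v w : Fin n →₀ ℕ) (hv : ∀ i, v i < N)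
    (hw : ∀ i, w i < N)
    (h : ∑ i : Fin n, N ^ i.1 * v i = ∑ i : Fin n, N ^ i.1 * w i) : v = w := by
  refine Finsupp.ext <| congrFun <| List.ofFn_inj.mp ?_
  apply Nat.ofDigits_inj_of_len_eq hN (by simp)
    (by intro l hl; obtain ⟨i, rfl⟩ := (List.mem_ofFn' _ _).1 hl; exact hv i)
    (by intro l hl; obtain ⟨i, rfl⟩ := (List.mem_ofFn' _ _).1 hl; exact hw i)
  simpa only [Nat.ofDigits_eq_sum_mapIdx, List.mapIdx_eq_ofFn, List.get_ofFn, List.length_ofFn,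
    Fin.val_cast, mul_comm, List.sum_ofFn] using! h

/-- Along the curve `x i + s ^ (N ^ i)`, a nonzero polynomial is not identically zero. -/
lemma curve_ne_zero {n N : ℕ} (q : MvPolynomial (Fin n) ℝ) (hq : q ≠ 0)
    (hN : q.totalDegree + 2 ≤ N) (x : Fin n → ℝ) :
    aeval (fun i : Fin n => Polynomial.C (x i) + Polynomial.X ^ (N ^ i.1)) q
      ≠ (0 : Polynomial ℝ) := by
  have hfac : ∀ i : Fin n, (Polynomial.C (x i) + Polynomial.X ^ (N ^ i.1) : Polynomial ℝ).Monic :=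
    fun i => by
      rw [add_comm]
      exact Polynomial.monic_X_pow_add_C _ (pow_ne_zero _ (by omega))
  have hmon : ∀ v : Fin n →₀ ℕ, (∏ i : Fin n,
      (Polynomial.C (x i) + Polynomial.X ^ (N ^ i.1) : Polynomial ℝ) ^ v i).Monic :=
    fun v => Polynomial.monic_prod_of_monic _ _ fun i _ => (hfac i).pow _
  have hdeg : ∀ v ∈ q.support, (Polynomial.C (coeff v q) * ∏ i : Fin n,
      (Polynomial.C (x i) + Polynomial.X ^ (N ^ i.1) : Polynomial ℝ) ^ v i).degree
      = ((∑ i : Fin n, N ^ i.1 * v i : ℕ) : WithBot ℕ) := by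
    intro v hv
    rw [Polynomial.degree_C_mul (mem_support_iff.1 hv),
      Polynomial.degree_eq_natDegree (hmon v).ne_zero,
      Polynomial.natDegree_prod_of_monic _ _ fun i _ => (hfac i).pow _]
    congr 1
    refine Finset.sum_congr rfl fun i _ => ?_
    rw [(hfac i).natDegree_pow, add_comm (Polynomial.C _), Polynomial.natDegree_X_pow_add_C,
      mul_comm]
  have hlt : ∀ v ∈ q.support, ∀ i, v i < N := fun v hv i =>
    lt_of_le_of_lt ((monomial_le_degreeOf i hv).trans (degreeOf_le_totalDegree q i)) (by omega)
  have hsum : aeval (fun i : Fin n => (Polynomial.C (x i) + Polynomial.X ^ (N ^ i.1) :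
      Polynomial ℝ)) q = ∑ v ∈ q.support, Polynomial.C (coeff v q) * ∏ i : Fin n,
      (Polynomial.C (x i) + Polynomial.X ^ (N ^ i.1) : Polynomial ℝ) ^ v i := by
    rw [aeval_def, eval₂_eq']
    rfl
  rw [hsum, ← Polynomial.degree_ne_bot, Polynomial.degree_sum_eq_of_disjoint]
  · obtain ⟨v, hv⟩ := support_nonempty.2 hq
    intro h
    have h1 := (Finset.sup_eq_bot_iff _ _).1 h v hv
    rw [hdeg v hv] at h1
    exact WithBot.coe_ne_bot h1
  · rintro v ⟨hv, -⟩ w ⟨hw, -⟩ hne h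
    simp only [Function.comp] at h
    rw [hdeg v hv, hdeg w hw] at h
    exact hne (digit_sum_inj (by omega) v w (hlt v hv) (hlt w hw) (by exact_mod_cast h))

/-- If `Q g = P` with `g` continuous at `0`, the lowest coefficient of `Q` recovers `g 0`. -/
lemma lowest_coeff (m : ℕ) : ∀ (P Q : Polynomial ℝ) (g : ℝ → ℝ), Continuous g →
    (∀ s, Q.eval s * g s = P.eval s) → (∀ j < m, Q.coeff j = 0) →
    Q.coeff m * g 0 = P.coeff m := by
  induction m with
  | zero =>
    intro P Q g _ h _
    simpa [Polynomial.coeff_zero_eq_eval_zero] using h 0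
  | succ m ih =>
    intro P Q g hg h hj
    have hQ0 : Q.coeff 0 = 0 := hj 0 (by omega)
    have hP0 : P.coeff 0 = 0 := by
      have := h 0
      rw [← Polynomial.coeff_zero_eq_eval_zero, ← Polynomial.coeff_zero_eq_eval_zero, hQ0] at this
      simpa using this.symm
    obtain ⟨Q', rfl⟩ := Polynomial.X_dvd_iff.2 hQ0
    obtain ⟨P', rfl⟩ := Polynomial.X_dvd_iff.2 hP0
    rw [Polynomial.coeff_X_mul, Polynomial.coeff_X_mul]
    refine ih P' Q' g hg ?_ ?_
    · have hd : Dense ({0}ᶜ : Set ℝ) := dense_compl_singleton 0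
      have := Continuous.ext_on hd (f := fun s => Q'.eval s * g s) (g := fun s => P'.eval s)
        (Q'.continuous.mul hg) P'.continuous (by
          intro s hs
          have := h s
          simp only [Polynomial.eval_mul, Polynomial.eval_X] at this
          rw [mul_assoc] at this
          exact mul_left_cancel₀ hs this)
      exact fun s => congrFun this s
    · intro j hjm
      have := hj (j + 1) (by omega)
      rwa [Polynomial.coeff_X_mul] at this

/-- Substitution of the curve `X i + s ^ (N ^ i)` with symbolic base point. -/
noncomputable def curveSubst (n N : ℕ) (q : MvPolynomial (Fin n) ℝ) :
    Polynomial (MvPolynomial (Fin n) ℝ) :=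
  aeval (fun i : Fin n => Polynomial.C (X i) + Polynomial.X ^ (N ^ i.1)) q

lemma curveSubst_map (n N : ℕ) (q : MvPolynomial (Fin n) ℝ) (x : Fin n → ℝ) :
    (curveSubst n N q).map (eval x) =
      aeval (fun i : Fin n => Polynomial.C (x i) + Polynomial.X ^ (N ^ i.1)) q := by
  unfold curveSubst
  induction q using MvPolynomial.induction_on with
  | C a => simp [Polynomial.algebraMap_apply, MvPolynomial.algebraMap_eq]
  | add p q hp hq => simp [hp, hq]
  | mul_X p i hp => simp [hp]

lemma curve_eval (n N : ℕ) (q : MvPolynomial (Fin n) ℝ) (x : Fin n → ℝ) (s : ℝ) :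
    (aeval (fun i : Fin n => (Polynomial.C (x i) + Polynomial.X ^ (N ^ i.1) : Polynomial ℝ))
      q).eval s = eval (fun i => x i + s ^ (N ^ i.1)) q := by
  induction q using MvPolynomial.induction_on with
  | C a => simp
  | add p q hp hq => simp [hp, hq]
  | mul_X p i hp => simp [hp]

/-- **Regulous functions, Théorème `thm.stratif`**: a `k`-regulous function on `ℝⁿ` admits
a finite partition of `ℝⁿ` into pairwise disjoint Zariski locally closed strata on each of
which it is regular. -/
theorem regulous_stratification (n k : ℕ) (f : (Fin n → ℝ) → ℝ)
    (hf : IsRegulous n k f) :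
    ∃ (m : ℕ) (S : Fin m → Set (Fin n → ℝ)),
      (∀ x : Fin n → ℝ, ∃! i : Fin m, x ∈ S i) ∧
      (∀ i : Fin m, ∃ a b : MvPolynomial (Fin n) ℝ,
        S i = {x | eval x a = 0} \ {x | eval x b = 0}) ∧
      (∀ i : Fin m, ∃ p q : MvPolynomial (Fin n) ℝ,
        ∀ x ∈ S i, eval x q ≠ 0 ∧ f x = eval x p / eval x q) := by
  obtain ⟨hc, p, q, hq, hpq⟩ := hf
  have hcont : Continuous f := hc.continuous
  set N := q.totalDegree + 2 with hN
  set Q := curveSubst n N q with hQ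
  set P := curveSubst n N p with hP
  have hne : ∀ x : Fin n → ℝ, ∃ j, eval x (Q.coeff j) ≠ 0 := by
    intro x
    by_contra! hcon
    apply curve_ne_zero q hq le_rfl x
    rw [← curveSubst_map]
    ext j
    rw [Polynomial.coeff_map, hcon j, Polynomial.coeff_zero]
  have hval : ∀ (x : Fin n → ℝ) (m : ℕ), (∀ j < m, eval x (Q.coeff j) = 0) →
      eval x (Q.coeff m) * f x = eval x (P.coeff m) := by
    intro x m hm
    have := lowest_coeff m (P.map (eval x)) (Q.map (eval x))
      (fun s => f (fun i => x i + s ^ (N ^ i.1))) (by fun_prop) (by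
        intro s
        rw [hQ, hP, curveSubst_map, curveSubst_map, curve_eval, curve_eval]
        exact hpq _) (by
        intro j hj
        rw [Polynomial.coeff_map, hm j hj])
    have hz : (fun i : Fin n => x i + (0 : ℝ) ^ (N ^ i.1)) = x := by
      funext i
      rw [zero_pow (pow_ne_zero _ (by omega)), add_zero]
    simpa only [hz, Polynomial.coeff_map] using this
  classical
  refine ⟨Q.natDegree + 1, fun m => {x | (∀ j < m.1, eval x (Q.coeff j) = 0) ∧
    eval x (Q.coeff m.1) ≠ 0}, ?_, ?_, ?_⟩
  · intro x
    have hle : Nat.find (hne x) < Q.natDegree + 1 := by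
      by_contra hcon
      apply Nat.find_spec (hne x)
      rw [Polynomial.coeff_eq_zero_of_natDegree_lt (by omega), map_zero]
    refine ⟨⟨Nat.find (hne x), hle⟩, ⟨fun j hj => ?_, Nat.find_spec (hne x)⟩, ?_⟩
    · exact not_not.1 (Nat.find_min (hne x) hj)
    · rintro m ⟨h1, h2⟩
      apply Fin.ext
      refine ((Nat.find_eq_iff (hne x)).2 ⟨h2, fun j hj => not_not.2 (h1 j hj)⟩).symm
  · intro m
    refine ⟨∑ j ∈ Finset.range m.1, Q.coeff j ^ 2, Q.coeff m.1, ?_⟩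
    ext x
    simp only [Set.mem_setOf_eq, Set.mem_diff, map_sum, map_pow]
    rw [Finset.sum_eq_zero_iff_of_nonneg (fun _ _ => sq_nonneg _)]
    simp
  · intro m
    refine ⟨P.coeff m.1, Q.coeff m.1, ?_⟩
    rintro x ⟨h1, h2⟩
    refine ⟨h2, ?_⟩
    rw [eq_div_iff h2, mul_comm]
    exact hval x m.1 h1
end

section
/- Let n, k be natural numbers, let f : ℝⁿ → ℝ be a k-regulous function, and let g : ℝⁿ → ℝ be a function that is k-regulous on the open set D(f) = {x : f(x) ≠ 0}, i.e. g is of class C^k on D(f) and there exist real polynomials p, q in n variables with q ≠ 0 such that q(x)·g(x) = p(x) for every x ∈ D(f). Then there exists a natural number N such that the function h : ℝⁿ → ℝ defined by h(x) = f(x)^N · g(x) for x ∈ D(f) and h(x) = 0 for x ∈ Z(f) is k-regulous on ℝⁿ. -/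
open MvPolynomial

/-- integrality over a triangular-like system -/
theorem aux_integral {A B : Type*} [CommRing A] [CommRing B] [Algebra A B] (m e : ℕ)
    (x : Fin m → B) (r : Fin m → MvPolynomial (Fin m) A) (hdeg : ∀ i, (r i).totalDegree < e)
    (hx : ∀ i, x i ^ e = aeval x (r i)) (W : MvPolynomial (Fin m) A) :
    IsIntegral A (aeval x W) := by
  classical
  let mon : (Fin m →₀ ℕ) → B := fun α => ∏ i, x i ^ α i
  have hmon : ∀ q : MvPolynomial (Fin m) A, aeval x q = ∑ α ∈ q.support, q.coeff α • mon α := by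
    intro q
    rw [aeval_def, eval₂_eq']
    simp [mon, Algebra.smul_def]
  have hadd : ∀ α β, mon (α + β) = mon α * mon β := by
    intro α β
    simp [mon, pow_add, Finset.prod_mul_distrib]
  have hfin : (Set.range (fun v : Fin m → Fin e => ∏ i, x i ^ (v i : ℕ))).Finite :=
    Set.finite_range _
  set N : Submodule A B :=
    Submodule.span A (Set.range (fun v : Fin m → Fin e => ∏ i, x i ^ (v i : ℕ))) with hN
  have key : ∀ k : ℕ, ∀ α : Fin m →₀ ℕ, α.degree = k → mon α ∈ N := by
    intro k
    induction k using Nat.strong_induction_on with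
    | _ k ih =>
      intro α hα
      by_cases hlt : ∀ i, α i < e
      · exact Submodule.subset_span ⟨fun i => ⟨α i, hlt i⟩, rfl⟩
      · push Not at hlt
        obtain ⟨i, hi⟩ := hlt
        have hsplit : α = (α - Finsupp.single i e) + Finsupp.single i e := by
          rw [tsub_add_cancel_of_le]
          simpa using hi
        set γ := α - Finsupp.single i e with hγ
        have hse : mon (Finsupp.single i e) = x i ^ e := by
          simp only [mon]
          rw [Finset.prod_eq_single i]
          · simp
          · intro j _ hj
            simp [hj.symm]
          · simp
        have hdγ : γ.degree + e = k := by
          rw [← hα]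
          conv_rhs => rw [hsplit]
          simp
        rw [hsplit, hadd, hse, hx, hmon, Finset.mul_sum]
        refine Submodule.sum_mem _ fun β hβ => ?_
        rw [mul_smul_comm, ← hadd]
        refine Submodule.smul_mem _ _ (ih _ ?_ _ rfl)
        have h1 : β.degree ≤ (r i).totalDegree := by
          have := le_totalDegree hβ
          rw [Finsupp.degree_apply]; exact this
        have h2 := hdeg i
        simp only [map_add]
        omega
  have hmem : ∀ q : MvPolynomial (Fin m) A, aeval x q ∈ N := by
    intro q
    rw [hmon]
    exact Submodule.sum_mem _ fun β _ => Submodule.smul_mem _ _ (key _ _ rfl)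
  have hle : Subalgebra.toSubmodule (aeval x : MvPolynomial (Fin m) A →ₐ[A] B).range = N := by
    apply le_antisymm
    · rintro _ ⟨q, rfl⟩
      exact hmem q
    · rw [hN, Submodule.span_le]
      rintro _ ⟨v, rfl⟩
      refine ⟨∏ i, X i ^ (v i : ℕ), ?_⟩
      simp
  refine IsIntegral.of_mem_of_fg (aeval x : MvPolynomial (Fin m) A →ₐ[A] B).range ?_ _ ⟨W, rfl⟩
  rw [hle]
  exact Submodule.fg_span hfin

/-- leading coefficient limit -/
theorem aux_lead (n : ℕ) (P : MvPolynomial (Fin (n+1)) ℝ) (hP : P ≠ 0) :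
    ∃ Q : MvPolynomial (Fin n) ℝ, Q ≠ 0 ∧ ∀ (L : Filter ℝ) [L.NeBot], L ≤ Filter.atTop →
      ∀ (u : ℝ → Fin n → ℝ) (u0 : Fin n → ℝ), Filter.Tendsto u L (nhds u0) →
      (∀ M, 0 < M → eval (Fin.cons M (u M)) P = 0) → eval u0 Q = 0 := by
  set p := finSuccEquiv ℝ n P with hp
  have hp0 : p ≠ 0 := by simpa [hp] using hP
  refine ⟨p.leadingCoeff, by simpa using hp0, ?_⟩
  intro L _ hL u u0 hu h
  have hc : ∀ j, Filter.Tendsto (fun M => eval (u M) (p.coeff j)) L (nhds (eval u0 (p.coeff j))) :=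
    fun j => ((MvPolynomial.continuous_eval (p.coeff j)).tendsto u0).comp hu
  have hinv : Filter.Tendsto (fun M : ℝ => M⁻¹) L (nhds 0) := tendsto_inv_atTop_zero.mono_left hL
  have hlim : Filter.Tendsto (fun M => ∑ j ∈ Finset.range (p.natDegree + 1),
      eval (u M) (p.coeff j) * (M⁻¹) ^ (p.natDegree - j)) L
      (nhds (∑ j ∈ Finset.range (p.natDegree + 1),
        eval u0 (p.coeff j) * (0:ℝ) ^ (p.natDegree - j))) :=
    tendsto_finsetSum _ fun j _ => (hc j).mul (hinv.pow _)
  have hz : (fun M => ∑ j ∈ Finset.range (p.natDegree + 1),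
      eval (u M) (p.coeff j) * (M⁻¹) ^ (p.natDegree - j)) =ᶠ[L] fun _ => 0 := by
    filter_upwards [hL (Filter.eventually_gt_atTop (0:ℝ))] with M hM
    have hM : 0 < M := hM
    have h1 := h M hM
    rw [eval_eq_eval_mv_eval', Polynomial.eval_map, Polynomial.eval₂_eq_sum_range, ← hp] at h1
    have h2 : (∑ j ∈ Finset.range (p.natDegree + 1),
      eval (u M) (p.coeff j) * (M⁻¹) ^ (p.natDegree - j)) =
      (∑ j ∈ Finset.range (p.natDegree + 1), eval (u M) (p.coeff j) * M ^ j) *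
        (M⁻¹) ^ p.natDegree := by
      rw [Finset.sum_mul]
      refine Finset.sum_congr rfl fun j hj => ?_
      have hj' : j ≤ p.natDegree := by simpa [Nat.lt_succ_iff] using hj
      obtain ⟨l, hl⟩ := Nat.exists_eq_add_of_le hj'
      rw [hl, Nat.add_sub_cancel_left, pow_add, mul_assoc]
      congr 1
      rw [← mul_assoc, ← mul_pow, mul_inv_cancel₀ hM.ne', one_pow, one_mul]
    rw [h2, h1, zero_mul]
  have h3 := tendsto_nhds_unique (hlim.congr' hz) tendsto_const_nhds
  rw [Finset.sum_range_succ] at h3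
  rw [Finset.sum_eq_zero] at h3
  · simpa using h3
  · intro j hj
    have : p.natDegree - j ≠ 0 := by simp at hj; omega
    simp [this]

/-- root bound -/
theorem aux_root (Q : MvPolynomial (Fin 2) ℝ) (hQ : Q ≠ 0) :
    ∃ (C w0 : ℝ) (N : ℕ), 0 ≤ C ∧ 0 ≤ w0 ∧ ∀ s w : ℝ, w0 ≤ w → eval ![s, w] Q = 0 →
      |s| ≤ C * (1 + w) ^ N := by
  set p := finSuccEquiv ℝ 1 Q with hp
  have hp0 : p ≠ 0 := by simpa [hp] using hQ
  let τ : MvPolynomial (Fin 1) ℝ →ₐ[ℝ] Polynomial ℝ := aeval (fun _ => Polynomial.X)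
  have hτe : ∀ (c : MvPolynomial (Fin 1) ℝ) (w : ℝ), eval ![w] c = Polynomial.eval w (τ c) := by
    intro c w
    have : (eval ![w] : MvPolynomial (Fin 1) ℝ →+* ℝ) =
        (Polynomial.evalRingHom w).comp (τ : MvPolynomial (Fin 1) ℝ →+* Polynomial ℝ) := by
      apply MvPolynomial.ringHom_ext
      · intro r; simp
      · intro i; simp [τ]
    exact congrArg (fun φ => φ c) this
  have hτ0 : ∀ c : MvPolynomial (Fin 1) ℝ, c ≠ 0 → τ c ≠ 0 := by
    intro c hc h0
    apply hc
    apply MvPolynomial.funext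
    intro x
    have : x = ![x 0] := by ext i; fin_cases i; rfl
    rw [this, hτe, h0]; simp
  -- lower bound for leading coeff
  have hlow : ∃ δ > 0, ∀ᶠ w in Filter.atTop, δ ≤ |Polynomial.eval w (τ p.leadingCoeff)| := by
    have hne := hτ0 p.leadingCoeff (by simpa using hp0)
    set c := τ p.leadingCoeff
    by_cases hd : 0 < c.degree
    · refine ⟨1, one_pos, ?_⟩
      exact (Polynomial.abs_tendsto_atTop c hd).eventually_ge_atTop 1
    · have := Polynomial.eq_C_of_degree_le_zero (not_lt.mp hd)
      refine ⟨|c.coeff 0|, ?_, ?_⟩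
      · apply abs_pos.mpr
        intro h; rw [h] at this; simp at this; exact hne this
      · filter_upwards with w
        rw [this]; simp
  obtain ⟨δ, hδ, hlow⟩ := hlow
  obtain ⟨w1, hw1⟩ := Filter.eventually_atTop.mp hlow
  -- upper bound for coefficients
  have hup : ∀ c : Polynomial ℝ, ∀ w : ℝ, 0 ≤ w →
      |Polynomial.eval w c| ≤ (∑ j ∈ Finset.range (c.natDegree + 1), |c.coeff j|) *
        (1 + w) ^ c.natDegree := by
    intro c w hw
    rw [Polynomial.eval_eq_sum_range, Finset.sum_mul]
    refine (Finset.abs_sum_le_sum_abs _ _).trans (Finset.sum_le_sum fun j hj => ?_)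
    rw [abs_mul, abs_pow, abs_of_nonneg hw]
    have hj' : j ≤ c.natDegree := by simpa [Nat.lt_succ_iff] using hj
    gcongr
    calc w ^ j ≤ (1 + w) ^ j := by gcongr; linarith
      _ ≤ (1 + w) ^ c.natDegree := pow_le_pow_right₀ (by linarith) hj'
  have hup2 : ∀ j : ℕ, ∃ (K : ℝ) (N : ℕ), 0 ≤ K ∧ ∀ w : ℝ, 0 ≤ w →
      |Polynomial.eval w (τ (p.coeff j))| ≤ K * (1 + w) ^ N := fun j =>
    ⟨_, _, Finset.sum_nonneg fun _ _ => abs_nonneg _, hup _⟩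
  choose K N hK hKN using hup2
  let NN := ∑ j ∈ Finset.range p.natDegree, N j
  let KK := ∑ j ∈ Finset.range p.natDegree, K j
  have hKK : 0 ≤ KK := Finset.sum_nonneg fun _ _ => hK _
  refine ⟨1 + KK / δ, max w1 0, NN, by positivity, le_max_right _ _, ?_⟩
  intro s w hw hz
  have hw0 : 0 ≤ w := (le_max_right _ _).trans hw
  have hlo := hw1 w ((le_max_left _ _).trans hw)
  have h1 : (1:ℝ) ≤ (1 + w) ^ NN := one_le_pow₀ (by linarith)
  by_cases hs : |s| ≤ 1
  · calc |s| ≤ 1 * 1 := by linarith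
      _ ≤ (1 + KK / δ) * (1 + w) ^ NN := by
        gcongr
        have : 0 ≤ KK / δ := by positivity
        linarith
  push Not at hs
  have hcons : (![s, w] : Fin 2 → ℝ) = Fin.cons s ![w] := rfl
  rw [hcons, eval_eq_eval_mv_eval', Polynomial.eval_map, Polynomial.eval₂_eq_sum_range, ← hp] at hz
  simp only [hτe] at hz
  rw [Finset.sum_range_succ] at hz
  have hdpos : 0 < p.natDegree := by
    by_contra hcon
    have h0 : p.natDegree = 0 := by omega
    rw [Polynomial.leadingCoeff, h0] at hlo
    rw [h0] at hz
    simp at hz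
    rw [hz] at hlo
    simp at hlo
    linarith
  obtain ⟨D, hD⟩ : ∃ D, p.natDegree = D + 1 := ⟨p.natDegree - 1, by omega⟩
  have h2 : |Polynomial.eval w (τ p.leadingCoeff)| * |s| ^ p.natDegree ≤
      (KK * (1 + w) ^ NN) * |s| ^ D := by
    have : Polynomial.eval w (τ p.leadingCoeff) * s ^ p.natDegree =
      - ∑ x ∈ Finset.range p.natDegree, Polynomial.eval w (τ (p.coeff x)) * s ^ x := by
      rw [Polynomial.leadingCoeff]; linarith
    rw [← abs_pow, ← abs_mul, this, abs_neg]
    refine (Finset.abs_sum_le_sum_abs _ _).trans ?_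
    rw [Finset.sum_mul, Finset.sum_mul]
    refine Finset.sum_le_sum fun j hj => ?_
    rw [abs_mul, abs_pow]
    have hj' : j < p.natDegree := by simpa using hj
    have hN : N j ≤ NN := Finset.single_le_sum (f := N) (fun _ _ => Nat.zero_le _) hj
    have : (1 + w) ^ N j ≤ (1 + w) ^ NN := pow_le_pow_right₀ (by linarith) hN
    have hs' : |s| ^ j ≤ |s| ^ D := pow_le_pow_right₀ hs.le (by omega)
    have hKj := hK j
    calc _ ≤ (K j * (1 + w) ^ N j) * |s| ^ j := by gcongr; exact hKN j w hw0
      _ ≤ _ := by gcongr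
  have hsD : 0 < |s| ^ D := by positivity
  have h3 : δ * |s| ≤ KK * (1 + w) ^ NN := by
    rw [hD, pow_succ'] at h2
    have : δ * |s| * |s| ^ D ≤ (KK * (1 + w) ^ NN) * |s| ^ D := by
      refine le_trans ?_ h2
      rw [← mul_assoc]
      gcongr
    exact le_of_mul_le_mul_right this hsD
  have h4 : |s| ≤ KK / δ * (1 + w) ^ NN := by
    rw [div_mul_eq_mul_div, le_div_iff₀ hδ]; linarith
  have : 0 ≤ (1 + w) ^ NN := by positivity
  linarith

theorem aux_fderiv {n : ℕ} (p : MvPolynomial (Fin n) ℝ) (x : Fin n → ℝ) :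
    HasFDerivAt (fun x : Fin n → ℝ => eval x p)
      (∑ i, (eval x (pderiv i p)) • ContinuousLinearMap.proj (R := ℝ) (φ := fun _ : Fin n => ℝ) i) x := by
  induction p using MvPolynomial.induction_on with
  | C a => simpa using hasFDerivAt_const a x
  | add p q hp hq =>
    have h := hp.add hq
    simp only [map_add, add_smul, Finset.sum_add_distrib]
    exact h
  | mul_X p j hp =>
    have h2 : HasFDerivAt (fun x : Fin n → ℝ => x j)
      (ContinuousLinearMap.proj (R := ℝ) (φ := fun _ : Fin n => ℝ) j) x :=
      (ContinuousLinearMap.proj (R := ℝ) (φ := fun _ : Fin n => ℝ) j).hasFDerivAt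
    have h := hp.mul h2
    simp only [eval_mul, eval_X]
    refine h.congr_fderiv ?_
    ext v
    have hs : ∀ i, eval x (pderiv i (p * X j)) =
        eval x (pderiv i p) * x j + eval x p * (if i = j then 1 else 0) := by
      intro i
      rw [pderiv_mul, pderiv_X]
      by_cases hij : i = j
      · subst hij; simp
      · simp [hij]
    simp only [hs, _root_.sum_apply, _root_.add_apply,
      _root_.smul_apply, ContinuousLinearMap.proj_apply, smul_eq_mul, add_mul,
      Finset.sum_add_distrib, mul_ite, ite_mul, mul_one, mul_zero, zero_mul, Finset.sum_ite_eq',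
      Finset.mem_univ, if_true, Finset.sum_ite_eq, Finset.mul_sum]
    rw [add_comm]
    congr 1
    exact Finset.sum_congr rfl fun i _ => by ring

theorem aux_crit {n : ℕ} (p : MvPolynomial (Fin n) ℝ) (x : Fin n → ℝ)
    (h : ∀ y, eval x p ≤ eval y p) (i : Fin n) : eval x (pderiv i p) = 0 := by
  have h1 : IsLocalMin (fun x : Fin n → ℝ => eval x p) x := Filter.Eventually.of_forall h
  have h2 := h1.hasFDerivAt_eq_zero (aux_fderiv p x)
  have h3 := congrArg (fun φ => φ (Pi.single i 1)) h2
  simpa [Pi.single_apply] using h3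

theorem aux_elim (m : ℕ) (Φ G F1 : MvPolynomial (Fin m) ℝ) :
    ∃ (d : ℕ) (P : MvPolynomial (Fin 4) ℝ), 0 < d ∧ P ≠ 0 ∧
      ∀ (M η s : ℝ) (x : Fin m → ℝ), 0 < η →
        (∀ i, eval x (pderiv i (Φ + (G - C s) ^ 2 + C M * F1 + C η⁻¹ * ∑ j, X j ^ (2 * d))) = 0) →
        eval ![M, η, s, eval x (Φ + (G - C s) ^ 2 + C M * F1 + C η⁻¹ * ∑ j, X j ^ (2 * d))] P
          = 0 := by
  classical
  let A := MvPolynomial (Fin 3) ℝ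
  let up : MvPolynomial (Fin m) ℝ →+* MvPolynomial (Fin m) A := map (C : ℝ →+* A)
  let aM : A := X 0
  let aη : A := X 1
  let aS : A := X 2
  let F : MvPolynomial (Fin m) A := up Φ + (up G - C aS) ^ 2 + C aM * up F1
  let R : Fin m → MvPolynomial (Fin m) A := fun i =>
    up (pderiv i Φ) + 2 * (up G - C aS) * up (pderiv i G) + C aM * up (pderiv i F1)
  let d : ℕ := (∑ i, (R i).totalDegree) + 1
  have hd : ∀ i, (R i).totalDegree < 2 * d - 1 := by
    intro i
    have := Finset.single_le_sum (f := fun i => (R i).totalDegree) (fun _ _ => Nat.zero_le _)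
      (Finset.mem_univ i)
    have h2 : d = (∑ i, (R i).totalDegree) + 1 := rfl
    omega
  have hd0 : 0 < d := Nat.succ_pos _
  let c : ℝ := (2 * (d:ℝ))⁻¹
  let r : Fin m → MvPolynomial (Fin m) A := fun i => C (- (aη * C c)) * R i
  have hr : ∀ i, (r i).totalDegree < 2 * d - 1 := by
    intro i
    refine lt_of_le_of_lt ?_ (hd i)
    refine (totalDegree_mul _ _).trans ?_
    rw [totalDegree_C, zero_add]
  let W : MvPolynomial (Fin m) A := F - C (C c) * ∑ i, X i * R i
  -- critical points
  let ι := {t : ℝ × ℝ × ℝ × (Fin m → ℝ) // 0 < t.2.1 ∧ ∀ i, eval t.2.2.2 (pderiv i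
    (Φ + (G - C t.2.2.1) ^ 2 + C t.1 * F1 + C t.2.1⁻¹ * ∑ j, X j ^ (2 * d))) = 0}
  let pt : ι → Fin 3 → ℝ := fun t => ![t.1.1, t.1.2.1, t.1.2.2.1]
  let φ : A →+* (ι → ℝ) := RingHom.pi fun t => eval (pt t)
  let _ : Algebra A (ι → ℝ) := φ.toAlgebra
  let x : Fin m → ι → ℝ := fun i t => t.1.2.2.2 i
  have hev : ∀ (q : MvPolynomial (Fin m) A) (t : ι),
      aeval x q t = eval t.1.2.2.2 (map (eval (pt t)) q) := by
    intro q t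
    have : (Pi.evalRingHom (fun _ : ι => ℝ) t).comp
        (aeval x : MvPolynomial (Fin m) A →ₐ[A] (ι → ℝ)).toRingHom =
        (eval t.1.2.2.2).comp (map (eval (pt t))) := by
      apply MvPolynomial.ringHom_ext
      · intro a
        simp [RingHom.algebraMap_toAlgebra, φ]
        try rfl
      · intro i
        simp [x]
    exact congrArg (fun ψ => ψ q) this
  have hup : ∀ (q : MvPolynomial (Fin m) ℝ) (t : ι), map (eval (pt t)) (up q) = q := by
    intro q t
    simp only [up, map_map]
    have : (eval (pt t)).comp (C : ℝ →+* A) = RingHom.id ℝ := by ext; simp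
    rw [this, map_id]
  have hcrit : ∀ (t : ι) i, eval t.1.2.2.2 (map (eval (pt t)) (R i)) +
      2 * d * t.1.2.1⁻¹ * t.1.2.2.2 i ^ (2 * d - 1) = 0 := by
    intro t i
    have h := t.2.2 i
    have h5 : ∀ y : Fin m → ℝ, eval y (pderiv i (∑ j, X j ^ (2 * d) : MvPolynomial (Fin m) ℝ)) =
        2 * d * y i ^ (2 * d - 1) := by
      intro y
      simp only [map_sum, pderiv_pow, pderiv_X]
      rw [Finset.sum_eq_single i]
      · simp
      · intro j _ hj
        simp [hj]
      · simp
    simp only [map_add, map_mul, pderiv_mul, pderiv_C, zero_mul, zero_add, h5, pderiv_pow, map_sub, map_pow] at h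
    simp only [R, map_add, map_mul, hup, map_sub]
    simp [pt, aS, aM] at h ⊢
    linear_combination h
  have hint : IsIntegral A (aeval x W) := by
    refine aux_integral m (2 * d - 1) x r hr ?_ W
    intro i
    funext t
    rw [hev]
    have h1 := hcrit t i
    have hη := t.2.1
    simp only [r, map_mul]
    simp only [map_C, eval_C, map_neg, map_mul]
    have h8 : eval (pt t) aη = t.1.2.1 := by simp [aη, pt]
    rw [h8]
    simp only [x, c, eval_C, Pi.pow_apply]
    field_simp at h1 ⊢
    linear_combination h1
  have hW : ∀ t : ι, aeval x W t = eval t.1.2.2.2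
      (Φ + (G - C t.1.2.2.1) ^ 2 + C t.1.1 * F1 + C t.1.2.1⁻¹ * ∑ j, X j ^ (2 * d)) := by
    intro t
    rw [hev]
    have hη := t.2.1
    simp only [W, F, map_add, map_sub, map_mul, map_pow, hup, map_sum]
    simp only [map_C, eval_C, map_X, eval_X, pt, aS, aM, c]
    have h6 : ∀ i, t.1.2.2.2 i * eval t.1.2.2.2 (map (eval (pt t)) (R i)) =
        - (2 * d * t.1.2.1⁻¹) * t.1.2.2.2 i ^ (2 * d) := by
      intro i
      have h1 := hcrit t i
      have h2 : t.1.2.2.2 i ^ (2 * d) = t.1.2.2.2 i ^ (2 * d - 1) * t.1.2.2.2 i := by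
        rw [← pow_succ]; congr 1
      rw [h2]
      linear_combination t.1.2.2.2 i * h1
    simp only [pt] at h6
    simp only [h6, ← Finset.mul_sum]
    simp
    field_simp
  obtain ⟨p, hpm, hp⟩ := hint
  let e : Fin 4 ≃ Fin 4 := ⟨![3, 0, 1, 2], ![1, 2, 3, 0], by decide, by decide⟩
  let P0 : MvPolynomial (Fin 4) ℝ := (finSuccEquiv ℝ 3).symm p
  refine ⟨d, rename e P0, hd0, ?_, ?_⟩
  · intro h
    rw [← map_zero (rename e)] at h
    have := rename_injective e e.injective h
    simp only [P0] at this
    rw [EmbeddingLike.map_eq_zero_iff] at this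
    exact hpm.ne_zero this
  · intro M η s y hη hy
    let t : ι := ⟨(M, η, s, y), hη, hy⟩
    have h1 := congrFun hp t
    set w := eval y (Φ + (G - C s) ^ 2 + C M * F1 + C η⁻¹ * ∑ j, X j ^ (2 * d)) with hw
    rw [eval_rename]
    have h2 : (![M, η, s, w] ∘ e : Fin 4 → ℝ) = Fin.cons w ![M, η, s] := by
      ext i; fin_cases i <;> rfl
    rw [h2, eval_eq_eval_mv_eval']
    simp only [P0, AlgEquiv.apply_symm_apply]
    have h3 : (Pi.evalRingHom (fun _ : ι => ℝ) t) (Polynomial.eval₂ (algebraMap A (ι → ℝ))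
        (aeval x W) p) = 0 := by
      rw [hp]; rfl
    rw [Polynomial.hom_eval₂] at h3
    have h4 : Pi.evalRingHom (fun _ : ι => ℝ) t (aeval x W) = w := hW t
    rw [h4] at h3
    rw [Polynomial.eval_map]
    exact h3

theorem aux_bdd {m d : ℕ} (hd : 0 < d) (c : ℝ) (y : Fin m → ℝ) (h : ∑ j, y j ^ (2 * d) ≤ c) :
    y ∈ Metric.closedBall (0 : Fin m → ℝ) (1 + |c|) := by
  rw [mem_closedBall_zero_iff, pi_norm_le_iff_of_nonneg (by positivity)]
  intro i
  rw [Real.norm_eq_abs]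
  by_cases h1 : |y i| ≤ 1
  · have := abs_nonneg c
    linarith
  push Not at h1
  have h2 : y i ^ (2 * d) ≤ ∑ j, y j ^ (2 * d) :=
    Finset.single_le_sum (f := fun j => y j ^ (2 * d))
      (fun j _ => (even_two_mul d).pow_nonneg _) (Finset.mem_univ i)
  have h3 : |y i| ≤ |y i| ^ (2 * d) := le_self_pow₀ h1.le (by omega)
  rw [(even_two_mul d).pow_abs] at h3
  have := le_abs_self c
  linarith

theorem aux_min (m : ℕ) (Φ G F1 : MvPolynomial (Fin m) ℝ) (hΦ : ∀ x, 0 ≤ eval x Φ)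
    (hF1 : ∀ x, 0 ≤ eval x F1) :
    ∃ (d : ℕ) (P : MvPolynomial (Fin 4) ℝ), 0 < d ∧ P ≠ 0 ∧
      ∀ (M η s : ℝ), 0 < M → 0 < η → ∃ x : Fin m → ℝ,
        (∀ y, eval x Φ + (eval x G - s) ^ 2 + M * eval x F1 + η⁻¹ * ∑ j, x j ^ (2 * d) ≤
          eval y Φ + (eval y G - s) ^ 2 + M * eval y F1 + η⁻¹ * ∑ j, y j ^ (2 * d)) ∧
        eval ![M, η, s, eval x Φ + (eval x G - s) ^ 2 + M * eval x F1 +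
          η⁻¹ * ∑ j, x j ^ (2 * d)] P = 0 := by
  obtain ⟨d, P, hd, hP, h⟩ := aux_elim m Φ G F1
  refine ⟨d, P, hd, hP, ?_⟩
  intro M η s hM hη
  have hH : ∀ y : Fin m → ℝ,
      eval y (Φ + (G - C s) ^ 2 + C M * F1 + C η⁻¹ * ∑ j, X j ^ (2 * d)) =
      eval y Φ + (eval y G - s) ^ 2 + M * eval y F1 + η⁻¹ * ∑ j, y j ^ (2 * d) := by
    intro y; simp
  obtain ⟨x, hx⟩ := (MvPolynomial.continuous_eval
    (Φ + (G - C s) ^ 2 + C M * F1 + C η⁻¹ * ∑ j, X j ^ (2 * d))).exists_forall_le_of_isBounded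
    0 (by
      refine (Metric.isBounded_closedBall (x := (0 : Fin m → ℝ)) (r := 1 + |η * (eval (0 : Fin m → ℝ)
        (Φ + (G - C s) ^ 2 + C M * F1 + C η⁻¹ * ∑ j, X j ^ (2 * d)))|)).subset ?_
      intro y hy
      apply aux_bdd hd
      simp only [Set.mem_ofPred_eq] at hy
      rw [hH y] at hy
      set c := (eval (0 : Fin m → ℝ)
        (Φ + (G - C s) ^ 2 + C M * F1 + C η⁻¹ * ∑ j, X j ^ (2 * d)))
      have h1 := hΦ y
      have h2 := hF1 y
      have h3 : 0 ≤ M * eval y F1 := by positivity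
      have h4 : η⁻¹ * ∑ j, y j ^ (2 * d) ≤ c := by
        have := sq_nonneg (eval y G - s)
        linarith
      rwa [inv_mul_le_iff₀ hη] at h4)
  refine ⟨x, ?_, ?_⟩
  · intro y
    rw [← hH, ← hH]; exact hx y
  · rw [← hH]
    exact h M η s x hη (fun i => aux_crit _ x hx i)

theorem poly_loj (m : ℕ) (Φ G F1 : MvPolynomial (Fin m) ℝ) (hΦ : ∀ x, 0 ≤ eval x Φ)
    (hF1 : ∀ x, 0 ≤ eval x F1)
    (hb : ∀ T : ℝ, ∃ B : ℝ, ∀ x, eval x F1 = 0 → eval x Φ ≤ T → |eval x G| ≤ B) :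
    ∃ (c : ℝ) (N : ℕ), 0 ≤ c ∧ ∀ x, eval x F1 = 0 → |eval x G| ≤ c * (1 + eval x Φ) ^ N := by
  by_cases hS : ∃ x0, eval x0 F1 = 0
  swap
  · push Not at hS
    exact ⟨0, 0, le_rfl, fun x hx => absurd hx (hS x)⟩
  obtain ⟨x0, hx0⟩ := hS
  obtain ⟨d, P, hd, hP, hmin⟩ := aux_min m Φ G F1 hΦ hF1
  obtain ⟨P1, hP1, hlim1⟩ := aux_lead 3 P hP
  obtain ⟨P2, hP2, hlim2⟩ := aux_lead 2 P1 hP1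
  let 𝒰 : Ultrafilter ℝ := Ultrafilter.of Filter.atTop
  have h𝒰 : (𝒰 : Filter ℝ) ≤ Filter.atTop := Ultrafilter.of_le _
  have hρ : ∀ y : Fin m → ℝ, 0 ≤ ∑ j, y j ^ (2 * d) := fun y =>
    Finset.sum_nonneg fun j _ => (even_two_mul d).pow_nonneg _
  -- first limit
  have step1 : ∀ η s : ℝ, 0 < η → ∃ w : ℝ, eval ![η, s, w] P1 = 0 ∧
      (∀ y, eval y F1 = 0 → w ≤ eval y Φ + (eval y G - s) ^ 2 + η⁻¹ * ∑ j, y j ^ (2 * d)) ∧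
      ∃ x, eval x F1 = 0 ∧ eval x Φ + (eval x G - s) ^ 2 ≤ w := by
    intro η s hη
    have hm : ∀ M : ℝ, ∃ x : Fin m → ℝ, 0 < M →
        (∀ y, eval x Φ + (eval x G - s) ^ 2 + M * eval x F1 + η⁻¹ * ∑ j, x j ^ (2 * d) ≤
          eval y Φ + (eval y G - s) ^ 2 + M * eval y F1 + η⁻¹ * ∑ j, y j ^ (2 * d)) ∧
        eval ![M, η, s, eval x Φ + (eval x G - s) ^ 2 + M * eval x F1 +
          η⁻¹ * ∑ j, x j ^ (2 * d)] P = 0 := by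
      intro M
      by_cases hM : 0 < M
      · obtain ⟨x, hx⟩ := hmin M η s hM hη
        exact ⟨x, fun _ => hx⟩
      · exact ⟨0, fun h => absurd h hM⟩
    choose x hx using hm
    let w : ℝ → ℝ := fun M => eval (x M) Φ + (eval (x M) G - s) ^ 2 + M * eval (x M) F1 +
          η⁻¹ * ∑ j, x M j ^ (2 * d)
    have hwle : ∀ M, 0 < M → ∀ y, eval y F1 = 0 →
        w M ≤ eval y Φ + (eval y G - s) ^ 2 + η⁻¹ * ∑ j, y j ^ (2 * d) := by
      intro M hM y hy
      have := (hx M hM).1 y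
      rw [hy, mul_zero, add_zero] at this
      exact this
    set K := eval x0 Φ + (eval x0 G - s) ^ 2 + η⁻¹ * ∑ j, x0 j ^ (2 * d) with hK
    have hpos : ∀ᶠ M in (𝒰 : Filter ℝ), 0 < M := h𝒰 (Filter.eventually_gt_atTop (0:ℝ))
    have hparts : ∀ M, 0 < M → 0 ≤ M * eval (x M) F1 ∧ 0 ≤ η⁻¹ * ∑ j, x M j ^ (2 * d) ∧
        0 ≤ eval (x M) Φ + (eval (x M) G - s) ^ 2 := by
      intro M hM
      have h1 := hF1 (x M)
      have h2 := hρ (x M)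
      have h3 := hΦ (x M)
      exact ⟨by positivity, by positivity, by positivity⟩
    -- limit of w
    obtain ⟨w0, -, hw0⟩ : ∃ w0 ∈ Set.Icc 0 K, Filter.Tendsto w 𝒰 (nhds w0) := by
      have := (isCompact_Icc (a := (0:ℝ)) (b := K)).ultrafilter_le_nhds (𝒰.map w) (by
        rw [Filter.le_principal_iff]
        change ∀ᶠ M in (𝒰 : Filter ℝ), w M ∈ Set.Icc 0 K
        filter_upwards [hpos] with M hM
        obtain ⟨h1, h2, h3⟩ := hparts M hM
        exact ⟨by simp only [w]; linarith, hwle M hM x0 hx0⟩)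
      simpa [Filter.Tendsto] using this
    obtain ⟨z, -, hz⟩ : ∃ z ∈ Metric.closedBall (0 : Fin m → ℝ) (1 + |η * K|),
        Filter.Tendsto x 𝒰 (nhds z) := by
      have := (isCompact_closedBall (0 : Fin m → ℝ) (1 + |η * K|)).ultrafilter_le_nhds (𝒰.map x) (by
        rw [Filter.le_principal_iff]
        change ∀ᶠ M in (𝒰 : Filter ℝ), x M ∈ Metric.closedBall (0 : Fin m → ℝ) (1 + |η * K|)
        filter_upwards [hpos] with M hM
        obtain ⟨h1, h2, h3⟩ := hparts M hM
        apply aux_bdd hd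
        have := hwle M hM x0 hx0
        rw [← inv_mul_le_iff₀ hη]
        simp only [w] at this
        linarith)
      simpa [Filter.Tendsto] using this
    have hcont : ∀ p : MvPolynomial (Fin m) ℝ,
        Filter.Tendsto (fun M => eval (x M) p) 𝒰 (nhds (eval z p)) := fun p =>
      ((MvPolynomial.continuous_eval p).tendsto z).comp hz
    refine ⟨w0, ?_, ?_, z, ?_, ?_⟩
    · refine hlim1 𝒰 h𝒰 (fun M => ![η, s, w M]) ![η, s, w0] ?_ ?_
      · rw [tendsto_pi_nhds]
        intro i
        fin_cases i
        · exact tendsto_const_nhds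
        · exact tendsto_const_nhds
        · exact hw0
      · intro M hM
        exact (hx M hM).2
    · intro y hy
      refine le_of_tendsto hw0 ?_
      filter_upwards [hpos] with M hM using hwle M hM y hy
    · have hle : eval z F1 ≤ 0 := by
        have hinv : Filter.Tendsto (fun M : ℝ => M⁻¹ * K) 𝒰 (nhds (0 * K)) :=
          (tendsto_inv_atTop_zero.mono_left h𝒰).mul_const K
        rw [zero_mul] at hinv
        refine le_of_tendsto_of_tendsto (hcont F1) hinv ?_
        filter_upwards [hpos] with M hM
        obtain ⟨h1, h2, h3⟩ := hparts M hM
        rw [le_inv_mul_iff₀ hM]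
        have := hwle M hM x0 hx0
        simp only [w] at this
        linarith
      exact le_antisymm hle (hF1 z)
    · refine le_of_tendsto_of_tendsto ((hcont Φ).add (((hcont G).sub_const s).pow 2)) hw0 ?_
      filter_upwards [hpos] with M hM
      obtain ⟨h1, h2, h3⟩ := hparts M hM
      simp only [w]
      linarith
  -- second limit
  have step2 : ∀ s : ℝ, ∃ w : ℝ, eval ![s, w] P2 = 0 ∧
      (∀ y, eval y F1 = 0 → w ≤ eval y Φ + (eval y G - s) ^ 2) ∧
      ∀ c, (∀ x, eval x F1 = 0 → c ≤ eval x Φ + (eval x G - s) ^ 2) → c ≤ w := by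
    intro s
    have hm : ∀ η : ℝ, ∃ w : ℝ, 0 < η → eval ![η, s, w] P1 = 0 ∧
      (∀ y, eval y F1 = 0 → w ≤ eval y Φ + (eval y G - s) ^ 2 + η⁻¹ * ∑ j, y j ^ (2 * d)) ∧
      ∃ x, eval x F1 = 0 ∧ eval x Φ + (eval x G - s) ^ 2 ≤ w := by
      intro η
      by_cases hη : 0 < η
      · obtain ⟨w, hw⟩ := step1 η s hη
        exact ⟨w, fun _ => hw⟩
      · exact ⟨0, fun h => absurd h hη⟩
    choose w hw using hm
    have hge1 : ∀ᶠ M in (𝒰 : Filter ℝ), 1 ≤ M := h𝒰 (Filter.eventually_ge_atTop (1:ℝ))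
    obtain ⟨w0, -, hw0⟩ : ∃ w0 ∈ Set.Icc 0 (eval x0 Φ + (eval x0 G - s) ^ 2 +
        ∑ j, x0 j ^ (2 * d)), Filter.Tendsto w 𝒰 (nhds w0) := by
      have := (isCompact_Icc (a := (0:ℝ)) (b := (eval x0 Φ + (eval x0 G - s) ^ 2 +
        ∑ j, x0 j ^ (2 * d)))).ultrafilter_le_nhds (𝒰.map w) (by
        rw [Filter.le_principal_iff]
        change ∀ᶠ M in (𝒰 : Filter ℝ), w M ∈ Set.Icc 0 _
        filter_upwards [hge1] with M hM
        obtain ⟨h1, h2, x, hx, h3⟩ := hw M (by linarith)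
        refine ⟨?_, ?_⟩
        · have := hΦ x
          have := sq_nonneg (eval x G - s)
          linarith
        · have h4 := h2 x0 hx0
          have h5 : M⁻¹ * ∑ j, x0 j ^ (2 * d) ≤ 1 * ∑ j, x0 j ^ (2 * d) :=
            mul_le_mul_of_nonneg_right (inv_le_one_of_one_le₀ hM) (hρ x0)
          linarith)
      simpa [Filter.Tendsto] using this
    refine ⟨w0, ?_, ?_, ?_⟩
    · refine hlim2 𝒰 h𝒰 (fun M => ![s, w M]) ![s, w0] ?_ ?_
      · rw [tendsto_pi_nhds]
        intro i
        fin_cases i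
        · exact tendsto_const_nhds
        · exact hw0
      · intro M hM
        exact (hw M hM).1
    · intro y hy
      have hinv : Filter.Tendsto (fun M : ℝ => eval y Φ + (eval y G - s) ^ 2 +
          M⁻¹ * ∑ j, y j ^ (2 * d)) 𝒰 (nhds (eval y Φ + (eval y G - s) ^ 2 +
          0 * ∑ j, y j ^ (2 * d))) :=
        ((tendsto_inv_atTop_zero.mono_left h𝒰).mul_const _).const_add _
      rw [zero_mul, add_zero] at hinv
      refine le_of_tendsto_of_tendsto hw0 hinv ?_
      filter_upwards [hge1] with M hM
      exact (hw M (by linarith)).2.1 y hy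
    · intro c hc
      refine ge_of_tendsto hw0 ?_
      filter_upwards [hge1] with M hM
      obtain ⟨h1, h2, x, hx, h3⟩ := hw M (by linarith)
      exact (hc x hx).trans h3
  obtain ⟨c, w0, N, hc, hw0, hroot⟩ := aux_root P2 hP2
  obtain ⟨B, hB⟩ := hb w0
  refine ⟨c + (|B| + w0 + 1), N, by positivity, ?_⟩
  intro y hy
  have h1 : (1:ℝ) ≤ (1 + eval y Φ) ^ N := one_le_pow₀ (by linarith [hΦ y])
  by_cases hs : |eval y G| ≤ |B| + w0 + 1
  · calc |eval y G| ≤ (|B| + w0 + 1) * 1 := by linarith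
      _ ≤ (c + (|B| + w0 + 1)) * (1 + eval y Φ) ^ N := by
        refine mul_le_mul (by linarith) h1 zero_le_one (by positivity)
  push Not at hs
  obtain ⟨w, hw1, hw2, hw3⟩ := step2 (eval y G)
  have hww : w0 ≤ w := by
    apply hw3
    intro x hx
    by_cases hxT : eval x Φ ≤ w0
    · have h2 := hB x hx hxT
      have h3 : |eval y G| - |eval x G| ≤ |eval x G - eval y G| := by
        rw [abs_sub_comm]; exact abs_sub_abs_le_abs_sub _ _
      have h4 := le_abs_self B
      have h5 : w0 + 1 ≤ |eval x G - eval y G| := by linarith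
      have h6 := hΦ x
      rw [← sq_abs (eval x G - eval y G)]
      nlinarith
    · push Not at hxT
      have := sq_nonneg (eval x G - eval y G)
      linarith
  have h2 := hroot _ w hww hw1
  have h3 := hw2 y hy
  simp at h3
  calc |eval y G| ≤ c * (1 + w) ^ N := h2
    _ ≤ (c + (|B| + w0 + 1)) * (1 + eval y Φ) ^ N := by
      have h4 := abs_nonneg B
      have h5 : (1 + w) ^ N ≤ (1 + eval y Φ) ^ N :=
        pow_le_pow_left₀ (by linarith) (by linarith) N
      exact mul_le_mul (by linarith) h5 (pow_nonneg (by linarith) N) (by positivity)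

theorem aux_dense_s5 {n : ℕ} (D : MvPolynomial (Fin n) ℝ) (hD : D ≠ 0) (x : Fin n → ℝ) :
    (nhdsWithin x {y | eval y D ≠ 0}).NeBot := by
  obtain ⟨y, hy⟩ : ∃ y, eval y D ≠ 0 := by
    by_contra h
    push Not at h
    exact hD (MvPolynomial.funext (by simpa using h))
  let r : Polynomial ℝ := aeval (fun i => Polynomial.C (x i) + Polynomial.X * Polynomial.C (y i - x i)) D
  have hr : ∀ t : ℝ, r.eval t = eval (fun i => x i + t * (y i - x i)) D := by
    intro t
    have : (Polynomial.evalRingHom t).comp (aeval (fun i => Polynomial.C (x i) +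
        Polynomial.X * Polynomial.C (y i - x i)) : MvPolynomial (Fin n) ℝ →ₐ[ℝ] Polynomial ℝ).toRingHom
        = eval (fun i => x i + t * (y i - x i)) := by
      apply MvPolynomial.ringHom_ext
      · intro a; simp
      · intro i; simp
    exact congrArg (fun ψ => ψ D) this
  have hr0 : r ≠ 0 := by
    intro h0
    have := hr 1
    rw [h0] at this
    simp at this
    exact hy this.symm
  rw [← mem_closure_iff_nhdsWithin_neBot]
  have hfin : {t : ℝ | r.eval t = 0}.Finite := by
    refine r.roots.toFinset.finite_toSet.subset ?_
    intro t ht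
    have ht' : r.eval t = 0 := ht
    simp [hr0, ht']
  have hd : Dense {t : ℝ | r.eval t = 0}ᶜ := hfin.countable.dense_compl ℝ
  have hc : Continuous (fun t : ℝ => (fun i => x i + t * (y i - x i) : Fin n → ℝ)) := by fun_prop
  have h0 := hd 0
  have h1 := (hc.continuousAt (x := 0)).continuousWithinAt.mem_closure_image h0
  simp only [zero_mul, add_zero] at h1
  refine closure_mono ?_ h1
  rintro _ ⟨t, ht, rfl⟩
  have ht' : ¬ r.eval t = 0 := ht
  rw [hr] at ht'
  exact ht'

theorem loj_cont (n : ℕ) (f g : (Fin n → ℝ) → ℝ) (hf : Continuous f)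
    (hg : ContinuousOn g {x | f x ≠ 0})
    (p q p' q' : MvPolynomial (Fin n) ℝ) (hq : q ≠ 0) (hq' : q' ≠ 0)
    (hfr : ∀ x, eval x q * f x = eval x p)
    (hgr : ∀ x, f x ≠ 0 → eval x q' * g x = eval x p') :
    ∃ (N : ℕ) (b : (Fin n → ℝ) → ℝ), Continuous b ∧
      ∀ x, f x ≠ 0 → |f x| ^ N * |g x| ≤ b x := by
  by_cases hp : p = 0
  · refine ⟨0, fun _ => 0, continuous_const, ?_⟩
    intro x hx
    exfalso
    apply hx
    have := aux_dense_s5 q hq x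
    refine tendsto_nhds_unique (f := f) (l := nhdsWithin x {y | eval y q ≠ 0})
      ((hf.tendsto x).mono_left nhdsWithin_le_nhds) ?_
    refine tendsto_const_nhds.congr' ?_
    filter_upwards [self_mem_nhdsWithin] with y hy
    have hy' : eval y q ≠ 0 := hy
    have h1 := hfr y
    rw [hp, map_zero, mul_eq_zero] at h1
    exact (h1.resolve_left hy').symm
  have hopen : IsOpen {x | f x ≠ 0} := isOpen_ne_fun hf continuous_const
  set D := p * q * q' with hDdef
  have hD : D ≠ 0 := mul_ne_zero (mul_ne_zero hp hq) hq'
  let ren : MvPolynomial (Fin n) ℝ →ₐ[ℝ] MvPolynomial (Fin (n+1)) ℝ := rename Fin.succ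
  have hren : ∀ (a : MvPolynomial (Fin n) ℝ) (x : Fin (n+1) → ℝ),
      eval x (ren a) = eval (fun i => x i.succ) a := by
    intro a x
    simp only [ren, eval_rename]
    rfl
  let V : MvPolynomial (Fin (n+1)) ℝ := ren (q * q * q') * X 0
  let Φ : MvPolynomial (Fin (n+1)) ℝ := ∑ j : Fin n, X j.succ ^ 2 + V ^ 2
  let G : MvPolynomial (Fin (n+1)) ℝ := ren (p' * p * q) * X 0
  let F1 : MvPolynomial (Fin (n+1)) ℝ := (X 0 * ren D - 1) ^ 2
  have hΦe : ∀ x, eval x Φ = ∑ j : Fin n, x j.succ ^ 2 + eval x V ^ 2 := by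
    intro x; simp [Φ]
  -- facts on S
  have hSfacts : ∀ x : Fin (n+1) → ℝ, x 0 * eval (fun i => x i.succ) D = 1 →
      f (fun i => x i.succ) ≠ 0 ∧ eval x V = (f (fun i => x i.succ))⁻¹ ∧
      eval x G = g (fun i => x i.succ) := by
    intro x hx
    set y : Fin n → ℝ := fun i => x i.succ with hy
    rw [hDdef, map_mul, map_mul] at hx
    have hpy : eval y p ≠ 0 := by intro h; rw [h] at hx; simp at hx
    have hfy : f y ≠ 0 := by
      intro h; apply hpy; rw [← hfr, h, mul_zero]
    refine ⟨hfy, ?_, ?_⟩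
    · refine eq_inv_of_mul_eq_one_left ?_
      simp only [V, map_mul, hren, eval_X]
      have := hfr y
      rw [← this] at hx
      linear_combination hx
    · simp only [G, map_mul, hren, eval_X]
      have h2 := hgr y hfy
      rw [← h2]
      linear_combination (g y) * hx
  have hF1e : ∀ x, eval x F1 = 0 → x 0 * eval (fun i => x i.succ) D = 1 := by
    intro x hx
    simp only [F1, map_pow, map_sub, map_mul, hren, eval_X, map_one] at hx
    have := pow_eq_zero_iff (two_ne_zero) |>.mp hx
    linarith
  obtain ⟨c, N, hc, hmain⟩ := poly_loj (n+1) Φ G F1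
    (by intro x; rw [hΦe]; exact add_nonneg (Finset.sum_nonneg fun _ _ => sq_nonneg _) (sq_nonneg _))
    (by intro x; simp only [F1, map_pow]; exact sq_nonneg _)
    (by
      intro T
      let K : Set (Fin n → ℝ) := {y | ∑ j, y j ^ (2 * 1) ≤ T} ∩ {y | 1 ≤ T * f y ^ 2}
      have hKc : IsCompact K := by
        refine Metric.isCompact_of_isClosed_isBounded ?_ ?_
        · refine IsClosed.inter (isClosed_le (by fun_prop) continuous_const)
            (isClosed_le continuous_const (by fun_prop))
        · refine (Metric.isBounded_closedBall (x := (0 : Fin n → ℝ)) (r := 1 + |T|)).subset ?_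
          intro y hy
          exact aux_bdd one_pos T y hy.1
      have hKs : K ⊆ {x | f x ≠ 0} := by
        intro y hy h
        have h2 : 1 ≤ T * f y ^ 2 := hy.2
        rw [h] at h2
        norm_num at h2
      obtain ⟨B, hB⟩ := hKc.exists_bound_of_continuousOn (hg.mono hKs)
      refine ⟨B, ?_⟩
      intro x hx hT
      obtain ⟨h1, h2, h3⟩ := hSfacts x (hF1e x hx)
      rw [h3]
      apply hB
      rw [hΦe, h2] at hT
      have h4 : 0 ≤ ∑ j : Fin n, x j.succ ^ 2 := Finset.sum_nonneg fun _ _ => sq_nonneg _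
      refine ⟨?_, ?_⟩
      · change ∑ j : Fin n, x j.succ ^ 2 ≤ T
        have := sq_nonneg ((f fun i => x i.succ)⁻¹)
        linarith
      · change 1 ≤ T * _
        have h5 : ((f fun i => x i.succ)⁻¹) ^ 2 ≤ T := by linarith
        have h6 : 0 < (f fun i => x i.succ) ^ 2 := by positivity
        rw [inv_pow, inv_le_iff_one_le_mul₀ h6] at h5
        exact h5)
  let b : (Fin n → ℝ) → ℝ := fun y => c * (f y ^ 2 * (1 + ∑ j, y j ^ 2) + 1) ^ N
  have hbc : Continuous b := by fun_prop
  refine ⟨2 * N, b, hbc, ?_⟩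
  have hU : ∀ y, eval y D ≠ 0 → |f y| ^ (2 * N) * |g y| ≤ b y := by
    intro y hy
    let x : Fin (n+1) → ℝ := Fin.cons (eval y D)⁻¹ y
    have hxy : (fun i : Fin n => x i.succ) = y := by ext i; simp [x]
    have hx0 : x 0 * eval (fun i => x i.succ) D = 1 := by
      rw [hxy]; simp [x, hy]
    have hxF : eval x F1 = 0 := by
      simp only [F1, map_pow, map_sub, map_mul, hren, eval_X, map_one]
      rw [hx0]; simp
    obtain ⟨h1, h2, h3⟩ := hSfacts x hx0
    have h4 := hmain x hxF
    rw [hΦe, h2, h3, hxy] at h4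
    rw [hxy] at h1
    have h5 : ∑ j : Fin n, x j.succ ^ 2 = ∑ j, y j ^ 2 := by
      refine Finset.sum_congr rfl fun j _ => ?_
      simp [x]
    rw [h5] at h4
    have h6 : f y ^ 2 * (1 + ∑ j, y j ^ 2) + 1 =
        |f y| ^ 2 * (1 + (∑ j, y j ^ 2 + (f y)⁻¹ ^ 2)) := by
      rw [sq_abs]; field_simp; ring
    simp only [b]
    rw [h6, mul_pow, ← pow_mul]
    calc |f y| ^ (2 * N) * |g y| ≤ |f y| ^ (2 * N) *
        (c * (1 + (∑ j, y j ^ 2 + (f y)⁻¹ ^ 2)) ^ N) := by gcongr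
      _ = _ := by ring
  intro x hx
  have := aux_dense_s5 D hD x
  have hgx : ContinuousAt g x := hg.continuousAt (hopen.mem_nhds hx)
  refine le_of_tendsto_of_tendsto (b := nhdsWithin x {y | eval y D ≠ 0})
    (f := fun y => |f y| ^ (2 * N) * |g y|) (g := b) ?_ ?_ ?_
  · exact (((hf.abs.pow _).tendsto x).mul hgx.abs).mono_left nhdsWithin_le_nhds
  · exact (hbc.tendsto x).mono_left nhdsWithin_le_nhds
  · filter_upwards [self_mem_nhdsWithin] with y hy using hU y hy

theorem clm_expand {n : ℕ} (L : (Fin n → ℝ) →L[ℝ] ℝ) :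
    L = ∑ i, L (Pi.single i 1) • ContinuousLinearMap.proj (R := ℝ) (φ := fun _ : Fin n => ℝ) i := by
  apply ContinuousLinearMap.coe_injective
  apply LinearMap.pi_ext
  intro i c
  have hc : (Pi.single i c : Fin n → ℝ) = c • Pi.single i 1 := by
    rw [← Pi.single_smul]; simp
  simp only [ContinuousLinearMap.coe_coe]
  rw [hc]
  simp [Pi.single_apply]

theorem rat_deriv {n : ℕ} (φ : (Fin n → ℝ) → ℝ) (U : Set (Fin n → ℝ)) (hU : IsOpen U)
    (x : Fin n → ℝ) (hx : x ∈ U) (hφ : DifferentiableAt ℝ φ x) (p q : MvPolynomial (Fin n) ℝ)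
    (h : ∀ y ∈ U, eval y q * φ y = eval y p) (i : Fin n) :
    eval x (q * q) * fderiv ℝ φ x (Pi.single i 1) = eval x (q * pderiv i p - p * pderiv i q) := by
  have h1 := (aux_fderiv q x).mul hφ.hasFDerivAt
  have h2 := (aux_fderiv p x).congr_of_eventuallyEq
    (f₁ := fun y => eval y q * φ y) (by filter_upwards [hU.mem_nhds hx] with y hy using h y hy)
  have h3 := congrArg (fun L => L (Pi.single i 1)) (h1.unique h2)
  simp [Pi.single_apply] at h3
  have h4 := h x hx
  simp only [map_mul, map_sub]
  rw [← h4]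
  linear_combination (eval x q) * h3

/-- extension by zero of `f^N g` -/
noncomputable def extZ {n : ℕ} (f g : (Fin n → ℝ) → ℝ) (N : ℕ) : (Fin n → ℝ) → ℝ :=
  fun x => if f x = 0 then 0 else f x ^ N * g x

theorem extZ_bound {n : ℕ} {f g b : (Fin n → ℝ) → ℝ} {N1 : ℕ}
    (hb : ∀ x, f x ≠ 0 → |f x| ^ N1 * |g x| ≤ b x) (j : ℕ) (x : Fin n → ℝ) :
    |extZ f g (N1 + j) x| ≤ |f x| ^ j * |b x| := by
  by_cases hx : f x = 0
  · simp only [extZ, hx, if_true]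
    rw [abs_zero]; positivity
  · simp only [extZ, hx, if_false]
    rw [abs_mul, abs_pow, pow_add, mul_comm (|f x| ^ N1), mul_assoc]
    gcongr
    exact (hb x hx).trans (le_abs_self _)

theorem loj_k (n k : ℕ) : ∀ (f g : (Fin n → ℝ) → ℝ), IsRegulous n k f →
    ContDiffOn ℝ k g {x : Fin n → ℝ | f x ≠ 0} →
    (∃ p q : MvPolynomial (Fin n) ℝ, q ≠ 0 ∧
      ∀ x : Fin n → ℝ, f x ≠ 0 → eval x q * g x = eval x p) →
    ∃ N0 : ℕ, ∀ N, N0 ≤ N → ContDiff ℝ k (extZ f g N) := by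
  induction k with
  | zero =>
    rintro f g ⟨hf, p, q, hq, hfr⟩ hg ⟨p', q', hq', hgr⟩
    have hfc : Continuous f := hf.continuous
    have hopen : IsOpen {x | f x ≠ 0} := isOpen_ne_fun hfc continuous_const
    obtain ⟨N1, b, hbc, hb⟩ := loj_cont n f g hfc hg.continuousOn p q p' q' hq hq' hfr hgr
    refine ⟨N1 + 1, fun N hN => ?_⟩
    simp only [Nat.cast_zero, contDiff_zero]
    rw [continuous_iff_continuousAt]
    intro x
    by_cases hx : f x = 0
    · obtain ⟨j, rfl⟩ := Nat.exists_eq_add_of_le hN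
      have h0 : extZ f g (N1 + 1 + j) x = 0 := by simp [extZ, hx]
      rw [ContinuousAt, h0]
      have hlim : Filter.Tendsto (fun y => |f y| ^ (1 + j) * |b y|) (nhds x) (nhds 0) := by
        have : Continuous (fun y => |f y| ^ (1 + j) * |b y|) := by fun_prop
        have h := this.tendsto x
        simpa [hx, pow_add] using h
      refine squeeze_zero_norm (fun y => ?_) hlim
      rw [Real.norm_eq_abs, add_assoc]
      exact extZ_bound hb _ y
    · have hev : (fun y => f y ^ N * g y) =ᶠ[nhds x] extZ f g N := by
        filter_upwards [hopen.mem_nhds hx] with y hy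
        have hy' : f y ≠ 0 := hy
        simp [extZ, hy']
      refine ContinuousAt.congr ?_ hev
      exact (hfc.continuousAt.pow N).mul (hg.continuousOn.continuousAt (hopen.mem_nhds hx))
  | succ k ih =>
    rintro f g ⟨hf, p, q, hq, hfr⟩ hg ⟨p', q', hq', hgr⟩
    have hfc : Continuous f := hf.continuous
    have hfd : Differentiable ℝ f := hf.differentiable (by simp)
    have hopen : IsOpen {x | f x ≠ 0} := isOpen_ne_fun hfc continuous_const
    have hgd : ∀ x, f x ≠ 0 → DifferentiableAt ℝ g x := fun x hx =>
      (hg.differentiableOn (by simp)).differentiableAt (hopen.mem_nhds hx)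
    obtain ⟨N1, b, hbc, hb⟩ := loj_cont n f g hfc hg.continuousOn p q p' q' hq hq' hfr hgr
    have hfreg : IsRegulous n k f := ⟨hf.of_le (by exact_mod_cast Nat.le_succ k), p, q, hq, hfr⟩
    have hgk : ContDiffOn ℝ k g {x | f x ≠ 0} := hg.of_le (by exact_mod_cast Nat.le_succ k)
    let f' : Fin n → (Fin n → ℝ) → ℝ := fun i x => fderiv ℝ f x (Pi.single i 1)
    let g' : Fin n → (Fin n → ℝ) → ℝ := fun i x => fderiv ℝ g x (Pi.single i 1)
    have hf'c : ∀ i, ContDiff ℝ k (f' i) := fun i =>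
      (hf.fderiv_right (m := k) (by simp)).clm_apply contDiff_const
    have hg'c : ∀ i, ContDiffOn ℝ k (g' i) {x | f x ≠ 0} := fun i =>
      (hg.fderiv_of_isOpen hopen (m := k) (by simp)).clm_apply contDiffOn_const
    have h1 : ∀ i, ∃ N0 : ℕ, ∀ N, N0 ≤ N → ContDiff ℝ k (extZ f (fun x => f' i x * g x) N) := by
      intro i
      refine ih f _ hfreg ((hf'c i).contDiffOn.mul hgk)
        ⟨(q * pderiv i p - p * pderiv i q) * p', q * q * q', by simp [hq, hq'], ?_⟩
      intro x hx
      have e1 := rat_deriv f Set.univ isOpen_univ x (Set.mem_univ _) (hfd x) p q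
        (fun y _ => hfr y) i
      have e2 := hgr x hx
      rw [map_mul, map_mul (eval x) (q * pderiv i p - p * pderiv i q), ← e1, ← e2]
      simp only [f']
      ring
    have h2 : ∀ i, ∃ N0 : ℕ, ∀ N, N0 ≤ N → ContDiff ℝ k (extZ f (g' i) N) := by
      intro i
      refine ih f _ hfreg (hg'c i)
        ⟨(q' * pderiv i p' - p' * pderiv i q'), q' * q', by simp [hq'], ?_⟩
      intro x hx
      exact rat_deriv g _ hopen x hx (hgd x hx) p' q' (fun y hy => hgr y hy) i
    choose A hA using h1
    choose B hB using h2
    refine ⟨N1 + 2 + ∑ i, A i + ∑ i, B i, fun N hN => ?_⟩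
    have hAi : ∀ i, A i ≤ ∑ i, A i := fun i =>
      Finset.single_le_sum (fun _ _ => Nat.zero_le _) (Finset.mem_univ i)
    have hBi : ∀ i, B i ≤ ∑ i, B i := fun i =>
      Finset.single_le_sum (fun _ _ => Nat.zero_le _) (Finset.mem_univ i)
    let h' : Fin n → (Fin n → ℝ) → ℝ := fun i x =>
      N * extZ f (fun x => f' i x * g x) (N - 1) x + extZ f (g' i) N x
    have hh' : ∀ i, ContDiff ℝ k (h' i) := by
      intro i
      have hAi' := hAi i
      have hBi' := hBi i
      exact (contDiff_const.mul (hA i (N - 1) (by omega))).add (hB i N (by omega))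
    have hder : ∀ x, HasFDerivAt (extZ f g N)
        (∑ i, h' i x • ContinuousLinearMap.proj (R := ℝ) (φ := fun _ : Fin n => ℝ) i) x := by
      intro x
      by_cases hx : f x = 0
      · have hz : ∀ i, h' i x = 0 := by intro i; simp [h', extZ, hx]
        simp only [hz, zero_smul, Finset.sum_const_zero]
        rw [hasFDerivAt_iff_isLittleO]
        have h0 : extZ f g N x = 0 := by simp [extZ, hx]
        simp only [h0, sub_zero, zero_apply]
        obtain ⟨j, hj⟩ : ∃ j, N = N1 + (2 + j) := ⟨N - N1 - 2, by omega⟩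
        have hbig : extZ f g N =O[nhds x] (fun y => f y * (f y * (f y ^ j * b y))) := by
          refine Asymptotics.IsBigO.of_bound 1 (Filter.Eventually.of_forall fun y => ?_)
          rw [one_mul, Real.norm_eq_abs, Real.norm_eq_abs, hj]
          refine (extZ_bound hb _ y).trans (le_of_eq ?_)
          simp only [abs_mul, abs_pow]
          ring
        have hfO : f =O[nhds x] (fun y => y - x) := by
          have := (hfd x).isBigO_sub
          simpa [hx] using this
        have hfo : (fun y => f y * (f y ^ j * b y)) =o[nhds x] (fun _ => (1:ℝ)) := by
          rw [Asymptotics.isLittleO_one_iff]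
          have : Continuous (fun y => f y * (f y ^ j * b y)) := by fun_prop
          have h := this.tendsto x
          simpa [hx] using h
        have := hbig.trans_isLittleO (hfO.norm_right.mul_isLittleO hfo)
        simpa using this
      · have hev : extZ f g N =ᶠ[nhds x] (fun y => f y ^ N * g y) := by
          filter_upwards [hopen.mem_nhds hx] with y hy
          have hy' : f y ≠ 0 := hy
          simp [extZ, hy']
        have hd := (((hfd x).hasFDerivAt.pow N).mul (hgd x hx).hasFDerivAt)
        refine HasFDerivAt.congr_of_eventuallyEq (hd.congr_fderiv ?_) hev
        rw [clm_expand (fderiv ℝ f x), clm_expand (fderiv ℝ g x)]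
        simp only [Finset.smul_sum, ← Finset.sum_add_distrib, smul_smul, ← add_smul]
        refine Finset.sum_congr rfl fun i _ => ?_
        congr 1
        simp only [h', extZ, hx, if_false, f', g']
        simp
        ring
    have hfe : fderiv ℝ (extZ f g N) = fun x =>
        ∑ i, h' i x • ContinuousLinearMap.proj (R := ℝ) (φ := fun _ : Fin n => ℝ) i :=
      funext fun x => (hder x).fderiv
    have hcast : ((k + 1 : ℕ) : WithTop ℕ∞) = (k : WithTop ℕ∞) + 1 := by push_cast; rfl
    rw [hcast, contDiff_succ_iff_fderiv]
    refine ⟨fun x => (hder x).differentiableAt, by simp, ?_⟩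
    rw [hfe]
    exact ContDiff.sum fun i _ => (hh' i).smul contDiff_const

/-- **Regulous functions, Lemme `LojaregulRn` (regulous Łojasiewicz inequality)**:
if `f` is `k`-regulous on `ℝⁿ` and `g` is `k`-regulous on `D(f) = {x | f x ≠ 0}`, then for
some natural number `N` the extension by `0` of `f^N · g` across `Z(f)` is `k`-regulous
on all of `ℝⁿ`. -/
theorem lojasiewicz_regulous (n k : ℕ) (f g : (Fin n → ℝ) → ℝ)
    (hf : IsRegulous n k f)
    (hg : ContDiffOn ℝ k g {x : Fin n → ℝ | f x ≠ 0})
    (hgrat : ∃ p q : MvPolynomial (Fin n) ℝ, q ≠ 0 ∧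
      ∀ x : Fin n → ℝ, f x ≠ 0 → eval x q * g x = eval x p) :
    ∃ N : ℕ, IsRegulous n k (fun x => if f x = 0 then 0 else f x ^ N * g x) := by
  obtain ⟨N0, hN0⟩ := loj_k n k f g hf hg hgrat
  refine ⟨N0 + 1, hN0 (N0 + 1) (by omega), ?_⟩
  obtain ⟨-, p, q, hq, hfr⟩ := hf
  obtain ⟨p', q', hq', hgr⟩ := hgrat
  refine ⟨p ^ (N0 + 1) * p', q ^ (N0 + 1) * q', mul_ne_zero (pow_ne_zero _ hq) hq', ?_⟩
  intro x
  by_cases hx : f x = 0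
  · have h1 : eval x p = 0 := by rw [← hfr, hx, mul_zero]
    simp [hx, h1]
  · simp only [hx, if_false, map_mul, map_pow]
    rw [← hfr, ← hgr x hx]
    ring
end

section
/- Let n, k be natural numbers and let J be a real ideal of the polynomial ring ℝ[x₁,…,xₙ], i.e. whenever p₁² + ⋯ + p_m² ∈ J with p_i ∈ ℝ[x₁,…,xₙ], each p_i ∈ J. Let ε : ℝ[x₁,…,xₙ] → R^k(ℝⁿ) be the ring homomorphism sending a polynomial to its evaluation function (which is k-regulous). Then the radical of the ideal of R^k(ℝⁿ) generated by ε(J) equals the ideal {f ∈ R^k(ℝⁿ) : f(x) = 0 for every x ∈ Z(J)}, where Z(J) = {x ∈ ℝⁿ : p(x) = 0 for all p ∈ J}. -/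
open MvPolynomial

/-- The ring `R^k(ℝⁿ)` of `k`-regulous functions, as a subring of the ring of all
functions `ℝⁿ → ℝ` with pointwise operations. -/
def regulousRing (n k : ℕ) : Subring ((Fin n → ℝ) → ℝ) where
  carrier := {f | IsRegulous n k f}
  one_mem' := ⟨contDiff_const, 1, 1, one_ne_zero, by simp⟩
  zero_mem' := ⟨contDiff_const, 0, 1, one_ne_zero, by simp⟩
  mul_mem' := by
    rintro f g ⟨hf, p₁, q₁, hq₁, h₁⟩ ⟨hg, p₂, q₂, hq₂, h₂⟩
    refine ⟨hf.mul hg, p₁ * p₂, q₁ * q₂, mul_ne_zero hq₁ hq₂, fun x => ?_⟩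
    simp only [eval_mul, Pi.mul_apply]
    linear_combination (eval x q₂ * g x) * h₁ x + eval x p₁ * h₂ x
  add_mem' := by
    rintro f g ⟨hf, p₁, q₁, hq₁, h₁⟩ ⟨hg, p₂, q₂, hq₂, h₂⟩
    refine ⟨hf.add hg, p₁ * q₂ + p₂ * q₁, q₁ * q₂, mul_ne_zero hq₁ hq₂, fun x => ?_⟩
    simp only [eval_mul, eval_add, Pi.add_apply]
    linear_combination (eval x q₂) * h₁ x + (eval x q₁) * h₂ x
  neg_mem' := by
    rintro f ⟨hf, p, q, hq, h⟩
    refine ⟨hf.neg, -p, q, hq, fun x => ?_⟩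
    simp only [map_neg, Pi.neg_apply]
    linear_combination -(h x)

set_option linter.style.haveILetI false

/-- Type synonym of the dual numbers, used to carry a twisted algebra structure. -/
def RegDual (L : Type) : Type := DualNumber L

noncomputable instance (L : Type) [Field L] : CommRing (RegDual L) :=
  inferInstanceAs (CommRing (DualNumber L))

theorem reg_snd_hom {σ L : Type} [Fintype σ] [Field L] [Algebra ℝ L]
    (ψ : MvPolynomial σ ℝ →ₐ[ℝ] DualNumber L) (E : MvPolynomial σ ℝ) :
    TrivSqZeroExt.snd (ψ E) =
      ∑ s, TrivSqZeroExt.fst (ψ (pderiv s E)) * TrivSqZeroExt.snd (ψ (X s)) := by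
  classical
  induction E using MvPolynomial.induction_on with
  | C a =>
    have : ψ (C a) = algebraMap ℝ _ a := ψ.commutes a
    simp [this, TrivSqZeroExt.algebraMap_eq_inl']
  | add p q hp hq => simp [hp, hq, add_mul, Finset.sum_add_distrib]
  | mul_X p i hp =>
    simp only [map_mul, Derivation.leibniz, pderiv_X, smul_eq_mul, map_add, TrivSqZeroExt.snd_mul, hp,
      TrivSqZeroExt.fst_add, TrivSqZeroExt.fst_mul, add_mul, Finset.sum_add_distrib]
    simp only [MulOpposite.smul_eq_mul_unop, MulOpposite.unop_op, Finset.sum_mul]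
    congr 1
    · rw [Finset.sum_eq_single i]
      · simp
      · intro b _ hb
        simp [hb.symm]
      · simp
    · refine Finset.sum_congr rfl fun s _ => by ring

theorem reg_formallySmooth {S L : Type} [CommRing S] [IsDomain S] [Algebra ℝ S] [Field L]
    [Algebra ℝ L] [Algebra.EssFiniteType ℝ L] [Algebra S L] [IsScalarTower ℝ S L]
    [FaithfulSMul S L] : Algebra.FormallySmooth S L := by
  let K := FractionRing S
  letI : Algebra K L := FractionRing.liftAlgebra S L
  haveI : IsScalarTower S K L := FractionRing.isScalarTower_liftAlgebra S L
  haveI : IsScalarTower ℝ K L := by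
    refine IsScalarTower.of_algebraMap_eq fun x => ?_
    rw [IsScalarTower.algebraMap_apply ℝ S K, ← IsScalarTower.algebraMap_apply S K L,
      ← IsScalarTower.algebraMap_apply ℝ S L]
  haveI : Algebra.EssFiniteType K L := Algebra.EssFiniteType.of_comp ℝ K L
  haveI : CharZero K := charZero_of_injective_algebraMap (algebraMap ℝ K).injective
  haveI : Algebra.FormallySmooth K L := inferInstance
  haveI : Algebra.FormallySmooth S K := Algebra.FormallySmooth.of_isLocalization (nonZeroDivisors S)
  exact Algebra.FormallySmooth.comp S K L

theorem reg_exists_hom {L : Type} [Field L] [Algebra ℝ L] [Algebra.EssFiniteType ℝ L]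
    (j : MvPolynomial (Fin 3) ℝ →ₐ[ℝ] L) (hj : Function.Injective j) :
    ∃ φ : L →ₐ[ℝ] DualNumber L, (∀ x, TrivSqZeroExt.fst (φ x) = x) ∧
      ∀ i : Fin 3, TrivSqZeroExt.snd (φ (j (X i))) = if i = 2 then 1 else 0 := by
  classical
  let S := MvPolynomial (Fin 3) ℝ
  letI : Algebra S L := j.toAlgebra
  haveI : IsScalarTower ℝ S L := IsScalarTower.of_algHom j
  haveI : FaithfulSMul S L := (faithfulSMul_iff_algebraMap_injective S L).2 hj
  haveI : Algebra.FormallySmooth S L := reg_formallySmooth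
  -- twisted algebra
  let tw : S →ₐ[ℝ] DualNumber L :=
    aeval (fun i => TrivSqZeroExt.inl (j (X i)) + (if i = 2 then DualNumber.eps else 0))
  have htwX : ∀ i, tw (X i) =
      TrivSqZeroExt.inl (j (X i)) + (if i = 2 then DualNumber.eps else 0) := fun i => aeval_X _ _
  letI : Algebra S (RegDual L) := tw.toRingHom.toAlgebra
  have hfst : ∀ s, TrivSqZeroExt.fst (tw s) = j s := by
    intro s
    have : (TrivSqZeroExt.fstHom ℝ L L).comp tw = j := by
      ext i
      simp only [tw, AlgHom.comp_apply, aeval_X]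
      by_cases h : i = 2 <;> simp [h]
    exact DFunLike.congr_fun this s
  let g : RegDual L →ₐ[S] L :=
    { (TrivSqZeroExt.fstHom ℝ L L : DualNumber L →ₐ[ℝ] L).toRingHom with
      commutes' := fun s => hfst s }
  have hg : Function.Surjective g := fun x => ⟨(TrivSqZeroExt.inl x : DualNumber L), rfl⟩
  have hnil : IsNilpotent (RingHom.ker (g : RegDual L →+* L)) := by
    refine ⟨2, ?_⟩
    rw [Ideal.zero_eq_bot, eq_bot_iff, pow_two, Ideal.mul_le]
    intro a ha b hb
    have ha' : TrivSqZeroExt.fst (a : DualNumber L) = 0 := ha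
    have hb' : TrivSqZeroExt.fst (b : DualNumber L) = 0 := hb
    rw [Ideal.mem_bot]
    refine TrivSqZeroExt.ext (R := L) (M := L) ?_ ?_
    · exact (TrivSqZeroExt.fst_mul (R := L) (M := L) a b).trans (by rw [ha']; exact zero_mul _)
    · refine (TrivSqZeroExt.snd_mul (R := L) (M := L) a b).trans (by rw [ha', hb']; simp; rfl)
  let φ : L →ₐ[S] RegDual L := Algebra.FormallySmooth.liftOfSurjective (AlgHom.id S L) g hg hnil
  have hφ : ∀ x, g (φ x) = x := fun x =>
    Algebra.FormallySmooth.liftOfSurjective_apply (AlgHom.id S L) g hg hnil x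
  have hφS : ∀ s : S, φ (j s) = tw s := fun s => φ.commutes s
  let φ' : L →ₐ[ℝ] DualNumber L :=
    { (φ : L →+* RegDual L) with
      commutes' := fun r => by
        have h1 : algebraMap ℝ L r = j (algebraMap ℝ S r) := (j.commutes r).symm
        have h2 : tw (algebraMap ℝ S r) = algebraMap ℝ _ r := tw.commutes r
        rw [← h2, ← hφS, ← h1]; rfl }
  refine ⟨φ', hφ, fun i => ?_⟩
  rw [show φ' (j (X i)) = tw (X i) from hφS _]
  rw [htwX]
  by_cases h : i = 2 <;> simp [h]

theorem reg_elim_field {ι : Type} [Fintype ι] {L : Type} [Field L] [Algebra ℝ L]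
    [Algebra.EssFiniteType ℝ L] (E : MvPolynomial (ι ⊕ Fin 3) ℝ)
    (π : MvPolynomial (ι ⊕ Fin 3) ℝ →ₐ[ℝ] L)
    (h0 : π E = 0) (h1 : ∀ i, π (pderiv (Sum.inl i) E) = 0) (h2 : π (pderiv (Sum.inr 2) E) ≠ 0) :
    ∃ F : MvPolynomial (Fin 3) ℝ, F ≠ 0 ∧ π (rename Sum.inr F) = 0 := by
  classical
  by_contra! hcon
  have hj : Function.Injective (π.comp (rename Sum.inr)) := by
    rw [injective_iff_map_eq_zero]
    intro F hF
    by_contra hne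
    exact hcon F hne hF
  obtain ⟨φ, hφ, hX⟩ := reg_exists_hom _ hj
  have key := reg_snd_hom (φ.comp π) E
  simp only [AlgHom.comp_apply, hφ] at key
  rw [h0, map_zero, Fintype.sum_sum_type] at key
  simp only [AlgHom.comp_apply, rename_X] at hX
  simp [hX, h1] at key
  exact h2 key.symm

theorem reg_elim_prime {ι : Type} [Fintype ι] (E : MvPolynomial (ι ⊕ Fin 3) ℝ)
    (𝔭 : Ideal (MvPolynomial (ι ⊕ Fin 3) ℝ)) [h𝔭 : 𝔭.IsPrime]
    (h0 : E ∈ 𝔭) (h1 : ∀ i, pderiv (Sum.inl i) E ∈ 𝔭) (h2 : pderiv (Sum.inr 2) E ∉ 𝔭) :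
    ∃ F : MvPolynomial (Fin 3) ℝ, F ≠ 0 ∧ rename Sum.inr F ∈ 𝔭 := by
  let R := MvPolynomial (ι ⊕ Fin 3) ℝ
  let L := FractionRing (R ⧸ 𝔭)
  let π : R →ₐ[ℝ] L := IsScalarTower.toAlgHom ℝ R L
  have hπ : ∀ r : R, π r = 0 ↔ r ∈ 𝔭 := by
    intro r
    have : π r = algebraMap (R ⧸ 𝔭) L (Ideal.Quotient.mk 𝔭 r) := rfl
    rw [this, FaithfulSMul.algebraMap_eq_zero_iff, Ideal.Quotient.eq_zero_iff_mem]
  haveI : Algebra.EssFiniteType ℝ L := Algebra.EssFiniteType.comp ℝ (R ⧸ 𝔭) L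
  obtain ⟨F, hF, hF'⟩ := reg_elim_field E π ((hπ _).2 h0) (fun i => (hπ _).2 (h1 i))
    (fun h => h2 ((hπ _).1 h))
  exact ⟨F, hF, (hπ _).1 hF'⟩

theorem reg_elim {ι : Type} [Fintype ι] (E : MvPolynomial (ι ⊕ Fin 3) ℝ) :
    ∃ F : MvPolynomial (Fin 3) ℝ, F ≠ 0 ∧ ∀ z : ι ⊕ Fin 3 → ℝ, eval z E = 0 →
      (∀ i, eval z (pderiv (Sum.inl i) E) = 0) → eval z (pderiv (Sum.inr 2) E) ≠ 0 →
      eval (fun i => z (Sum.inr i)) F = 0 := by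
  classical
  let I : Ideal (MvPolynomial (ι ⊕ Fin 3) ℝ) :=
    Ideal.span ({E} ∪ Set.range fun i => pderiv (Sum.inl i) E)
  have hfin : I.minimalPrimes.Finite := Ideal.finite_minimalPrimes_of_isNoetherianRing _ I
  have hex : ∀ 𝔭 : Ideal (MvPolynomial (ι ⊕ Fin 3) ℝ), ∃ F : MvPolynomial (Fin 3) ℝ, F ≠ 0 ∧
      (𝔭 ∈ I.minimalPrimes → pderiv (Sum.inr 2) E ∉ 𝔭 → rename Sum.inr F ∈ 𝔭) := by
    intro 𝔭
    by_cases h : 𝔭 ∈ I.minimalPrimes ∧ pderiv (Sum.inr 2) E ∉ 𝔭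
    · haveI := h.1.1.1
      have hI := h.1.1.2
      obtain ⟨F, hF, hF'⟩ := reg_elim_prime E 𝔭 (hI (Ideal.subset_span (by simp)))
        (fun i => hI (Ideal.subset_span (by simp))) h.2
      exact ⟨F, hF, fun _ _ => hF'⟩
    · exact ⟨1, one_ne_zero, fun a b => absurd ⟨a, b⟩ h⟩
  choose F hF hF' using hex
  refine ⟨∏ 𝔭 ∈ hfin.toFinset, F 𝔭, Finset.prod_ne_zero_iff.2 fun 𝔭 _ => hF 𝔭, ?_⟩
  intro z h0 h1 h2
  haveI : (RingHom.ker (eval z)).IsPrime := RingHom.ker_isPrime _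
  have hle : I ≤ RingHom.ker (eval z) := by
    rw [Ideal.span_le]
    rintro _ (rfl | ⟨i, rfl⟩)
    · exact h0
    · exact h1 i
  obtain ⟨𝔭, hp, hple⟩ := Ideal.exists_minimalPrimes_le hle
  have := hple (hF' 𝔭 hp fun h => h2 (hple h))
  rw [RingHom.mem_ker, eval_rename] at this
  rw [map_prod]
  exact Finset.prod_eq_zero (hfin.mem_toFinset.2 hp) this

theorem reg_div {m : ℕ} (F : MvPolynomial (Fin (m + 1)) ℝ) (hF : F ≠ 0) :
    ∃ (e : ℕ) (Q : MvPolynomial (Fin (m + 1)) ℝ) (F0 : MvPolynomial (Fin m) ℝ), F0 ≠ 0 ∧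
      ∀ (d : ℝ) (y : Fin m → ℝ), eval (Fin.cons d y : Fin (m + 1) → ℝ) F =
        d ^ e * (d * eval (Fin.cons d y : Fin (m + 1) → ℝ) Q + eval y F0) := by
  have hG : finSuccEquiv ℝ m F ≠ 0 := by simpa using hF
  obtain ⟨q, hq, hq'⟩ := Polynomial.exists_eq_pow_rootMultiplicity_mul_and_not_dvd _ hG 0
  simp only [map_zero, sub_zero] at hq hq'
  rw [Polynomial.X_dvd_iff] at hq'
  refine ⟨Polynomial.rootMultiplicity 0 (finSuccEquiv ℝ m F), (finSuccEquiv ℝ m).symm q.divX, q.coeff 0, hq', fun d y => ?_⟩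
  rw [eval_eq_eval_mv_eval', eval_eq_eval_mv_eval']
  conv_lhs => rw [hq]
  simp only [AlgEquiv.apply_symm_apply]
  conv_lhs => rw [← Polynomial.divX_mul_X_add q]
  simp [mul_comm d]

theorem reg_bound (F : MvPolynomial (Fin 2) ℝ) (hF : F ≠ 0) (y : ℝ → ℝ)
    (hy0 : ∀ t, 0 < t → 0 ≤ y t)
    (hlim : Filter.Tendsto y (nhdsWithin 0 (Set.Ioi 0)) (nhds 0))
    (hFy : ∀ t, 0 < t → eval ![t, y t] F = 0) :
    ∃ (a : ℕ) (C : ℝ), ∀ᶠ t in nhdsWithin (0 : ℝ) (Set.Ioi 0), y t ^ a ≤ C * t := by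
  obtain ⟨e, Q, F1, hF1, h1⟩ := reg_div F hF
  obtain ⟨a, Q2, F2, hF2, h2⟩ := reg_div F1 hF1
  obtain ⟨c, hc⟩ : ∃ c : ℝ, F2 = C c := ⟨_, eq_C_of_isEmpty F2⟩
  have hc0 : c ≠ 0 := by rintro rfl; simp [hc] at hF2
  have hid : Filter.Tendsto (fun t : ℝ => t) (nhdsWithin 0 (Set.Ioi 0)) (nhds 0) :=
    tendsto_nhdsWithin_of_tendsto_nhds Filter.tendsto_id
  have hv2 : Filter.Tendsto (fun t => (![y t] : Fin 1 → ℝ)) (nhdsWithin 0 (Set.Ioi 0))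
      (nhds ![0]) := by
    rw [tendsto_pi_nhds]; intro i; fin_cases i; simpa using hlim
  have hv1 : Filter.Tendsto (fun t => (![t, y t] : Fin 2 → ℝ)) (nhdsWithin 0 (Set.Ioi 0))
      (nhds ![0, 0]) := by
    rw [tendsto_pi_nhds]; intro i; fin_cases i
    · simpa using hid
    · simpa using hlim
  have hQ := (((MvPolynomial.continuous_eval Q).tendsto _).comp hv1).abs
  have hQ2 := ((hlim.mul (((MvPolynomial.continuous_eval Q2).tendsto _).comp hv2)).add_const c).abs
  simp only [zero_mul, zero_add] at hQ2
  have e1 := hQ.eventually_lt_const (lt_add_one _)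
  have e2 := hQ2.eventually_const_lt (show |c| / 2 < |c| by have := abs_pos.2 hc0; linarith)
  set M := |eval ![0, 0] Q| + 1
  refine ⟨a, 2 * M / |c|, ?_⟩
  filter_upwards [e1, e2, self_mem_nhdsWithin] with t h3 h4 ht
  have ht : 0 < t := ht
  have k1 := h1 t ![y t]
  have k2 := h2 (y t) ![]
  have k0 := hFy t ht
  simp only [Function.comp_apply] at h3 h4
  change eval ![t, y t] F = t ^ e * (t * eval ![t, y t] Q + eval ![y t] F1) at k1
  change eval ![y t] F1 = y t ^ a * (y t * eval ![y t] Q2 + eval ![] F2) at k2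
  rw [k0, eq_comm, mul_eq_zero, or_iff_right (pow_ne_zero _ ht.ne')] at k1
  rw [hc, eval_C] at k2
  have k3 : y t ^ a * |y t * eval ![y t] Q2 + c| = t * |eval ![t, y t] Q| := by
    rw [← abs_of_nonneg (pow_nonneg (hy0 t ht) a), ← abs_mul, ← k2, ← abs_of_pos ht, ← abs_mul,
      abs_of_pos ht, ← abs_neg]
    congr 1; linarith
  have k4 : y t ^ a * (|c| / 2) ≤ t * M := by
    calc _ ≤ y t ^ a * |y t * eval ![y t] Q2 + c| := by
          gcongr
          exact pow_nonneg (hy0 t ht) a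
      _ = _ := k3
      _ ≤ _ := by gcongr
  have := abs_pos.2 hc0
  rw [div_mul_eq_mul_div, le_div_iff₀ this]
  linarith

theorem reg_dense {n : ℕ} (q : MvPolynomial (Fin n) ℝ) (hq : q ≠ 0) :
    Dense {x : Fin n → ℝ | eval x q ≠ 0} := by
  rw [Metric.dense_iff]
  intro x r hr
  by_contra hcon
  apply hq
  refine MvPolynomial.funext_set (fun i => Metric.ball (x i) r) (fun i => ?_) ?_
  · rw [Real.ball_eq_Ioo]; exact Set.Ioo_infinite (by linarith)
  · intro z hz
    by_contra hne
    apply hcon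
    refine ⟨z, ?_, by simpa using hne⟩
    rw [ball_pi x hr]; exact hz

theorem reg_hasDerivAt {σ : Type} [DecidableEq σ] (E : MvPolynomial σ ℝ) (z : σ → ℝ) (i : σ) (s : ℝ) :
    HasDerivAt (fun s => eval (Function.update z i s) E)
      (eval (Function.update z i s) (pderiv i E)) s := by
  induction E using MvPolynomial.induction_on with
  | C a => simpa using hasDerivAt_const s a
  | add p q hp hq =>
    simp only [map_add]
    exact hp.add hq
  | mul_X p j hp =>
    have hX : HasDerivAt (fun s => Function.update z i s j) (if j = i then 1 else 0) s := by
      by_cases h : j = i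
      · subst h; simp only [Function.update_self, if_true]; exact hasDerivAt_id s
      · simpa [h] using hasDerivAt_const s (z j)
    have := hp.mul hX
    simp only [map_mul, eval_X, Derivation.leibniz, pderiv_X, smul_eq_mul, map_add]
    have e : eval (Function.update z i s) p * eval (Function.update z i s) ((Pi.single i 1 : σ → MvPolynomial σ ℝ) j) +
        Function.update z i s j * eval (Function.update z i s) (pderiv i p) =
        eval (Function.update z i s) (pderiv i p) * Function.update z i s j +
        eval (Function.update z i s) p * if j = i then 1 else 0 := by
      by_cases h : j = i
      · subst h; simp; ring
      · simp [h]; ring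
    rw [e]
    exact this

theorem reg_contDiff {V : Type} [NormedAddCommGroup V] [NormedSpace ℝ V] (f P : V → ℝ)
    (hP : ∀ k : ℕ, ContDiff ℝ k P) (N : ℕ) (hPn : ∀ x, 0 ≤ P x)
    (hb : ∀ x0, ∃ C, ∀ᶠ x in nhds x0, |f x| ^ N ≤ C * P x) (h0 : ∀ x, P x = 0 → f x = 0)
    (k : ℕ) (hf : ContDiff ℝ k f) :
    ∀ a, ∃ M0, ∀ M, M0 ≤ M → ContDiff ℝ k (fun x => f x ^ M / P x ^ (a + 1)) := by
  have bound : ∀ a j M, N * (a + 1) + j ≤ M → ∀ x0, f x0 = 0 →  ∃ C, ∀ᶠ x in nhds x0,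
      |f x ^ M / P x ^ (a + 1)| ≤ C * |f x| ^ j := by
    intro a j M hM x0 hx0
    obtain ⟨C, hC⟩ := hb x0
    have hc : ∀ᶠ x in nhds x0, |f x| ≤ 1 := by
      have := (hf.continuous.tendsto x0).abs
      rw [hx0, abs_zero] at this
      filter_upwards [this.eventually_lt_const one_pos] with x hx using hx.le
    refine ⟨(max C 0) ^ (a + 1), ?_⟩
    filter_upwards [hC, hc] with x hx hx1
    rcases (hPn x).eq_or_lt with h | h
    · rw [← h]; simp; positivity
    rw [abs_div, abs_pow, abs_pow, abs_of_pos h, div_le_iff₀ (by positivity)]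
    calc |f x| ^ M ≤ |f x| ^ (N * (a + 1) + j) := pow_le_pow_of_le_one (abs_nonneg _) hx1 hM
      _ = (|f x| ^ N) ^ (a + 1) * |f x| ^ j := by rw [pow_add, pow_mul]
      _ ≤ (max C 0 * P x) ^ (a + 1) * |f x| ^ j := by
        gcongr
        exact hx.trans (by gcongr; exact le_max_left _ _)
      _ = _ := by rw [mul_pow]; ring
  induction k with
  | zero =>
    intro a
    refine ⟨N * (a + 1) + 1, fun M hM => ?_⟩
    rw [Nat.cast_zero, contDiff_zero, continuous_iff_continuousAt]
    intro x0
    by_cases h : P x0 = 0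
    · obtain ⟨C, hC⟩ := bound a 1 M hM x0 (h0 x0 h)
      have hfx := h0 x0 h
      unfold ContinuousAt
      have hz : (fun x => f x ^ M / P x ^ (a + 1)) x0 = 0 := by simp [h]
      rw [hz]
      refine squeeze_zero_norm' (a := fun x => C * |f x| ^ 1) hC ?_
      have := ((hf.continuous.tendsto x0).abs.pow 1).const_mul C
      simpa [hfx] using this
    · have h1 := hf.continuous.continuousAt (x := x0)
      have h2 := (hP 0).continuous.continuousAt (x := x0)
      exact (h1.pow M).div (h2.pow _) (pow_ne_zero _ h)
  | succ k ih =>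
    intro a
    have hfk : ContDiff ℝ k f := hf.of_le (by exact_mod_cast Nat.le_succ k)
    obtain ⟨M1, hM1⟩ := ih hfk a
    obtain ⟨M2, hM2⟩ := ih hfk (a + 1)
    refine ⟨N * (a + 1) + 2 + M1 + M2, fun M hM => ?_⟩
    have hfd : Differentiable ℝ f := hf.differentiable (by simp)
    have hPd : Differentiable ℝ P := (hP 1).differentiable (by simp)
    have hd : ∀ x, HasFDerivAt (fun x => f x ^ M / P x ^ (a + 1))
        ((f x ^ (M - 1) / P x ^ (a + 1)) • ((M : ℝ) • fderiv ℝ f x) -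
          (f x ^ M / P x ^ (a + 1 + 1)) • (((a : ℝ) + 1) • fderiv ℝ P x)) x := by
      intro x
      by_cases h : P x = 0
      · obtain ⟨C, hC⟩ := bound a 2 M (by omega) x (h0 x h)
        have hfx := h0 x h
        have hO : (fun y => f y ^ M / P y ^ (a + 1)) =O[nhds x] fun y => ‖y - x‖ ^ 2 := by
          have h1 : (fun y => f y ^ M / P y ^ (a + 1)) =O[nhds x] fun y => f y ^ 2 := by
            refine Asymptotics.IsBigO.of_bound C ?_
            filter_upwards [hC] with y hy
            rwa [Real.norm_eq_abs, Real.norm_eq_abs, abs_pow (f y) 2]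
          have h2 : f =O[nhds x] fun y => ‖y - x‖ := by
            have := (hfd x).isBigO_sub
            simp only [hfx, sub_zero] at this
            exact this.norm_right
          exact h1.trans (h2.pow 2)
        have := hO.hasFDerivAt (𝕜 := ℝ) (by norm_num)
        simpa [h] using this
      · have h1 := ((hfd x).hasFDerivAt.pow M)
        have h2 := ((hPd x).hasFDerivAt.pow (a + 1))
        have h3 := h1.mul ((hasDerivAt_inv (pow_ne_zero (a + 1) h)).comp_hasFDerivAt x h2)
        obtain ⟨M', rfl⟩ : ∃ M', M = M' + 1 := ⟨M - 1, by omega⟩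
        have h4 : (fun x => f x ^ (M' + 1) / P x ^ (a + 1)) =
          (fun x => f x ^ (M' + 1)) * (Inv.inv ∘ fun x => P x ^ (a + 1)) := by
          ext y; simp [div_eq_mul_inv]
        rw [h4]
        refine HasFDerivAt.congr_fderiv h3 ?_
        ext v
        simp
        field_simp
        ring
    rw [Nat.cast_succ, contDiff_succ_iff_hasFDerivAt]
    refine ⟨_, ?_, hd⟩
    have c1 : ContDiff ℝ k (fderiv ℝ f) := hf.fderiv_right (by simp)
    have c2 : ContDiff ℝ k (fderiv ℝ P) := (hP (k + 1)).fderiv_right (by simp)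
    exact ((hM1 (M - 1) (by omega)).smul (c1.const_smul _)).sub
      ((hM2 M (by omega)).smul (c2.const_smul _))

/-- The sum of squares of the coordinates. -/
noncomputable def regSq {n : ℕ} (x : Fin n → ℝ) : ℝ := ∑ i, x i ^ 2

theorem regSq_nonneg {n : ℕ} (x : Fin n → ℝ) : 0 ≤ regSq x :=
  Finset.sum_nonneg fun i _ => sq_nonneg _

theorem regSq_continuous {n : ℕ} : Continuous (regSq (n := n)) := by
  unfold regSq; fun_prop

theorem regSq_le {n : ℕ} (x : Fin n → ℝ) : ‖x‖ ^ 2 ≤ regSq x := by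
  have h : ‖x‖ ≤ √(regSq x) := by
    refine (pi_norm_le_iff_of_nonneg (Real.sqrt_nonneg _)).2 fun i => ?_
    refine Real.le_sqrt_of_sq_le ?_
    rw [Real.norm_eq_abs, sq_abs]
    exact Finset.single_le_sum (f := fun i => x i ^ 2) (fun i _ => sq_nonneg _) (Finset.mem_univ i)
  calc ‖x‖ ^ 2 ≤ √(regSq x) ^ 2 := by gcongr
    _ = _ := Real.sq_sqrt (regSq_nonneg x)

/-- Algebraic relation for the maxima of the regularised quotients. -/
theorem reg_max {n : ℕ} (P p q : MvPolynomial (Fin n) ℝ) (hP : ∀ x, 0 ≤ eval x P) :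
    ∃ F : MvPolynomial (Fin 3) ℝ, F ≠ 0 ∧ ∀ d t : ℝ, 0 < d → 0 < t →
      ∃ x : Fin n → ℝ, (∀ x', t * eval x' p ^ 2 / (eval x' P * eval x' p ^ 2 +
          t * ((1 + regSq x') * eval x' p ^ 2 + eval x' q ^ 2) + d) ≤
        t * eval x p ^ 2 / (eval x P * eval x p ^ 2 +
          t * ((1 + regSq x) * eval x p ^ 2 + eval x q ^ 2) + d)) ∧
        eval ![d, t, t * eval x p ^ 2 / (eval x P * eval x p ^ 2 +
          t * ((1 + regSq x) * eval x p ^ 2 + eval x q ^ 2) + d)] F = 0 := by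
  classical
  let r : MvPolynomial (Fin n) ℝ → MvPolynomial (Fin n ⊕ Fin 3) ℝ := fun a => rename Sum.inl a
  let E : MvPolynomial (Fin n ⊕ Fin 3) ℝ :=
    X (Sum.inr 2) * (r P * r p ^ 2 + X (Sum.inr 1) * ((1 + ∑ i, X (Sum.inl i) ^ 2) * r p ^ 2 + r q ^ 2)
      + X (Sum.inr 0)) - X (Sum.inr 1) * r p ^ 2
  have hE : ∀ z : Fin n ⊕ Fin 3 → ℝ, eval z E = z (Sum.inr 2) *
      (eval (fun i => z (Sum.inl i)) P * eval (fun i => z (Sum.inl i)) p ^ 2 +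
        z (Sum.inr 1) * ((1 + regSq (fun i => z (Sum.inl i))) * eval (fun i => z (Sum.inl i)) p ^ 2 +
          eval (fun i => z (Sum.inl i)) q ^ 2) + z (Sum.inr 0)) -
        z (Sum.inr 1) * eval (fun i => z (Sum.inl i)) p ^ 2 := by
    intro z
    have hc : z ∘ Sum.inl = fun i => z (Sum.inl i) := rfl
    simp [E, r, eval_rename, regSq, hc]
  obtain ⟨F, hF, hFE⟩ := reg_elim E
  refine ⟨F, hF, fun d t hd ht => ?_⟩
  set Den : (Fin n → ℝ) → ℝ := fun x => eval x P * eval x p ^ 2 +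
          t * ((1 + regSq x) * eval x p ^ 2 + eval x q ^ 2) + d with hDen
  have hDpos : ∀ x, 0 < Den x := fun x => by
    have := hP x
    have := regSq_nonneg x
    positivity
  have hDc : Continuous Den := by
    have := regSq_continuous (n := n)
    have h1 := MvPolynomial.continuous_eval P
    have h2 := MvPolynomial.continuous_eval p
    have h3 := MvPolynomial.continuous_eval q
    fun_prop
  have hφc : Continuous fun x => t * eval x p ^ 2 / Den x := by
    have h2 := MvPolynomial.continuous_eval p
    exact (by fun_prop : Continuous fun x => t * eval x p ^ 2).div hDc fun x => (hDpos x).ne'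
  have hφn : ∀ x, 0 ≤ t * eval x p ^ 2 / Den x := fun x => by
    have := hDpos x; positivity
  have hφle : ∀ x, t * eval x p ^ 2 / Den x ≤ 1 / (1 + ‖x‖ ^ 2) := by
    intro x
    rw [div_le_div_iff₀ (hDpos x) (by positivity)]
    have h1 := regSq_le x
    have h2 := hP x
    have h3 : t * eval x p ^ 2 * (1 + ‖x‖ ^ 2) ≤ t * eval x p ^ 2 * (1 + regSq x) := by gcongr
    have h4 : 0 ≤ eval x P * eval x p ^ 2 := by positivity
    have h5 : 0 ≤ t * eval x q ^ 2 := by positivity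
    simp only [hDen]
    nlinarith
  obtain ⟨x, hx⟩ : ∃ x, ∀ x', t * eval x' p ^ 2 / Den x' ≤ t * eval x p ^ 2 / Den x := by
    by_cases h : ∃ x1, 0 < t * eval x1 p ^ 2 / Den x1
    · obtain ⟨x1, h1⟩ := h
      refine hφc.exists_forall_ge' x1 ?_
      have h2 : Filter.Tendsto (fun x : Fin n → ℝ => 1 / (1 + ‖x‖ ^ 2)) (Filter.cocompact _)
          (nhds 0) := by
        simp only [one_div]
        refine Filter.Tendsto.inv_tendsto_atTop ?_
        refine Filter.tendsto_atTop_add_const_left _ _ ?_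
        exact (Filter.tendsto_pow_atTop two_ne_zero).comp tendsto_norm_cocompact_atTop
      filter_upwards [h2.eventually_lt_const h1] with x hx
      exact (hφle x).trans hx.le
    · push Not at h
      exact ⟨0, fun x' => (h x').trans (hφn 0)⟩
  refine ⟨x, hx, ?_⟩
  set y := t * eval x p ^ 2 / Den x with hy
  let z : Fin n ⊕ Fin 3 → ℝ := Sum.elim x ![d, t, y]
  have hz : (fun i => z (Sum.inr i)) = ![d, t, y] := rfl
  rw [← hz]
  have hEz : ∀ x' : Fin n → ℝ, eval (Sum.elim x' ![d, t, y] : Fin n ⊕ Fin 3 → ℝ) E =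
      y * Den x' - t * eval x' p ^ 2 := by
    intro x'
    rw [hE]; rfl
  have hE0 : eval z E = 0 := by
    rw [hEz, hy, div_mul_cancel₀ _ (hDpos x).ne', sub_self]
  have hEn : ∀ x' : Fin n → ℝ, 0 ≤ eval (Sum.elim x' ![d, t, y] : Fin n ⊕ Fin 3 → ℝ) E := by
    intro x'
    rw [hEz, sub_nonneg]
    exact (div_le_iff₀ (hDpos x')).1 (hx x')
  refine hFE z hE0 (fun i => ?_) ?_
  · have h1 := reg_hasDerivAt E z (Sum.inl i) (x i)
    have hu : ∀ s, Function.update z (Sum.inl i) s =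
        Sum.elim (Function.update x i s) ![d, t, y] := fun s => Sum.update_elim_inl
    have hmin : IsLocalMin (fun s => eval (Function.update z (Sum.inl i) s) E) (x i) := by
      refine Filter.Eventually.of_forall fun s => ?_
      simp only [hu, Function.update_eq_self]
      exact hE0.le.trans (hEn _)
    have h2 := hmin.hasDerivAt_eq_zero h1
    rwa [hu, Function.update_eq_self] at h2
  · have h1 := reg_hasDerivAt E z (Sum.inr 2) y
    have hu : ∀ s, eval (Function.update z (Sum.inr 2) s) E = s * Den x - t * eval x p ^ 2 := by
      intro s
      rw [hE]
      simp [z, hDen]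
    simp only [hu] at h1
    have h2 : HasDerivAt (fun s => s * Den x - t * eval x p ^ 2) (1 * Den x) y :=
      ((hasDerivAt_id y).mul_const _).sub_const _
    have h3 := h1.unique h2
    have h4 : Function.update z (Sum.inr 2) y = z := by
      rw [Function.update_eq_self_iff]; rfl
    rw [h4] at h3
    rw [h3, one_mul]
    exact (hDpos x).ne'

theorem reg_loj {n : ℕ} (P p q : MvPolynomial (Fin n) ℝ) (hP : ∀ x, 0 ≤ eval x P) (hq : q ≠ 0)
    (f : (Fin n → ℝ) → ℝ) (hf : Continuous f) (hqf : ∀ x, eval x q * f x = eval x p)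
    (h0 : ∀ x, eval x P = 0 → f x = 0) :
    ∃ N : ℕ, ∀ x0, ∃ C, ∀ᶠ x in nhds x0, |f x| ^ N ≤ C * eval x P := by
  classical
  obtain ⟨F, hF, hmax⟩ := reg_max P p q hP
  have hPc := MvPolynomial.continuous_eval P
  have hsc := regSq_continuous (n := n)
  let D : (Fin n → ℝ) → ℝ := fun x => (1 + regSq x) * f x ^ 2 + 1
  have hD : ∀ x, 1 ≤ D x := fun x => by
    have := regSq_nonneg x
    simp only [D]
    have : 0 ≤ (1 + regSq x) * f x ^ 2 := by positivity
    linarith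
  have hDc : Continuous D := by fun_prop
  let Y : ℝ → (Fin n → ℝ) → ℝ := fun t x => f x ^ 2 / (eval x P * f x ^ 2 / t + D x)
  have hden : ∀ t, 0 < t → ∀ x, 0 < eval x P * f x ^ 2 / t + D x := fun t ht x => by
    have := hD x
    have := hP x
    have : 0 ≤ eval x P * f x ^ 2 / t := by positivity
    linarith
  have hYn : ∀ t, 0 < t → ∀ x, 0 ≤ Y t x := fun t ht x => by
    have := hden t ht x
    simp only [Y]; positivity
  have hY1 : ∀ t, 0 < t → ∀ x, Y t x * (1 + regSq x) ≤ 1 := fun t ht x => by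
    have h := hden t ht x
    simp only [Y]
    rw [div_mul_eq_mul_div, div_le_one h]
    have := hP x
    have : 0 ≤ eval x P * f x ^ 2 / t := by positivity
    simp only [D]; linarith
  have hY2 : ∀ t, 0 < t → ∀ x, Y t x ≤ f x ^ 2 := fun t ht x => by
    have h := hden t ht x
    refine div_le_self (sq_nonneg _) ?_
    have := hP x
    have : 0 ≤ eval x P * f x ^ 2 / t := by positivity
    linarith [hD x]
  have hY3 : ∀ t, 0 < t → ∀ x, Y t x * eval x P ≤ t := fun t ht x => by
    have h := hden t ht x
    simp only [Y]
    rw [div_mul_eq_mul_div, div_le_iff₀ h, mul_add, mul_div_cancel₀ _ ht.ne']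
    have : 0 ≤ t * D x := by have := hD x; positivity
    linarith
  have hYle1 : ∀ t, 0 < t → ∀ x, Y t x ≤ 1 := fun t ht x => by
    nlinarith [hY1 t ht x, hYn t ht x, regSq_nonneg x]
  have hYc : ∀ t, 0 < t → Continuous (Y t) := fun t ht =>
    (hf.pow 2).div (((hPc.mul (hf.pow 2)).div_const t).add hDc) fun x => (hden t ht x).ne'
  have hbdd : ∀ t, 0 < t → BddAbove (Set.range (Y t)) := fun t ht =>
    ⟨1, by rintro _ ⟨x, rfl⟩; exact hYle1 t ht x⟩
  let y : ℝ → ℝ := fun t => ⨆ x, Y t x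
  have hYy : ∀ t, 0 < t → ∀ x, Y t x ≤ y t := fun t ht x => le_ciSup (hbdd t ht) x
  have hy0 : ∀ t, 0 < t → 0 ≤ y t := fun t ht => (hYn t ht 0).trans (hYy t ht 0)
  -- the relation in the limit
  obtain ⟨e, Q, F0, hF0, hdiv⟩ := reg_div F hF
  have hrel : ∀ t, 0 < t → eval ![t, y t] F0 = 0 := by
    intro t ht
    have hch : ∀ d : ℝ, ∃ w : ℝ, 0 < d → (w ≤ y t ∧ (∀ x, t * eval x p ^ 2 / (eval x P * eval x p ^ 2 +
          t * ((1 + regSq x) * eval x p ^ 2 + eval x q ^ 2) + d) ≤ w) ∧ eval ![d, t, w] F = 0) := by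
      intro d
      by_cases hd : 0 < d
      · obtain ⟨x, hx, hx'⟩ := hmax d t hd ht
        refine ⟨_, fun _ => ⟨?_, hx, hx'⟩⟩
        refine le_trans ?_ (hYy t ht x)
        have hD1 := hden t ht x
        have hPx := hP x
        have hs := regSq_nonneg x
        rw [← hqf x]
        simp only [Y]
        rw [div_le_div_iff₀ (by positivity) hD1]
        have e1 : t * (eval x q * f x) ^ 2 * (eval x P * f x ^ 2 / t + D x) =
          f x ^ 2 * (eval x P * (eval x q * f x) ^ 2 +
            t * ((1 + regSq x) * (eval x q * f x) ^ 2 + eval x q ^ 2)) := by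
          simp only [D]; field_simp
        rw [e1]
        have : 0 ≤ f x ^ 2 * d := by positivity
        nlinarith
      · exact ⟨0, fun h => absurd h hd⟩
    choose w hw using hch
    have hwlim : Filter.Tendsto w (nhdsWithin 0 (Set.Ioi 0)) (nhds (y t)) := by
      rw [tendsto_order]
      constructor
      · intro η hη
        obtain ⟨x, hx⟩ := exists_lt_of_lt_ciSup hη
        obtain ⟨x', hx1, hx2⟩ := (reg_dense q hq).inter_open_nonempty _
          (isOpen_lt continuous_const (hYc t ht)) ⟨x, hx⟩
        have hx1 : η < Y t x' := hx1
        have hx2 : eval x' q ≠ 0 := hx2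
        have hPx := hP x'
        have hs := regSq_nonneg x'
        have hpos : 0 < eval x' P * eval x' p ^ 2 +
            t * ((1 + regSq x') * eval x' p ^ 2 + eval x' q ^ 2) := by positivity
        have hl : Filter.Tendsto (fun d : ℝ => t * eval x' p ^ 2 / (eval x' P * eval x' p ^ 2 +
            t * ((1 + regSq x') * eval x' p ^ 2 + eval x' q ^ 2) + d)) (nhdsWithin 0 (Set.Ioi 0))
            (nhds (t * eval x' p ^ 2 / (eval x' P * eval x' p ^ 2 +
            t * ((1 + regSq x') * eval x' p ^ 2 + eval x' q ^ 2) + 0))) := by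
          refine tendsto_nhdsWithin_of_tendsto_nhds ?_
          refine Filter.Tendsto.div tendsto_const_nhds
            (tendsto_const_nhds.add Filter.tendsto_id) (by rw [add_zero]; exact hpos.ne')
        have hYeq : t * eval x' p ^ 2 / (eval x' P * eval x' p ^ 2 +
            t * ((1 + regSq x') * eval x' p ^ 2 + eval x' q ^ 2) + 0) = Y t x' := by
          have hD1 := hden t ht x'
          rw [add_zero]
          simp only [Y]
          rw [div_eq_div_iff hpos.ne' hD1.ne', ← hqf x']
          simp only [D]; field_simp
        rw [hYeq] at hl
        filter_upwards [hl.eventually_const_lt hx1, self_mem_nhdsWithin] with d h1 h2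
        exact h1.trans_le ((hw d h2).2.1 x')
      · intro η hη
        filter_upwards [self_mem_nhdsWithin] with d h2
        exact (hw d h2).1.trans_lt hη
    have hid : Filter.Tendsto (fun t : ℝ => t) (nhdsWithin 0 (Set.Ioi 0)) (nhds 0) :=
      tendsto_nhdsWithin_of_tendsto_nhds Filter.tendsto_id
    have hv2 : Filter.Tendsto (fun d => (![t, w d] : Fin 2 → ℝ)) (nhdsWithin 0 (Set.Ioi 0))
        (nhds ![t, y t]) := by
      rw [tendsto_pi_nhds]; intro i; fin_cases i
      · simp
      · simpa using hwlim
    have hv3 : Filter.Tendsto (fun d => (![d, t, w d] : Fin 3 → ℝ)) (nhdsWithin 0 (Set.Ioi 0))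
        (nhds ![0, t, y t]) := by
      rw [tendsto_pi_nhds]; intro i; fin_cases i
      · simpa using hid
      · simp
      · simpa using hwlim
    have hlim := (hid.mul (((MvPolynomial.continuous_eval Q).tendsto _).comp hv3)).add
      (((MvPolynomial.continuous_eval F0).tendsto _).comp hv2)
    rw [zero_mul, zero_add] at hlim
    refine tendsto_nhds_unique (hlim.congr' ?_) tendsto_const_nhds
    filter_upwards [self_mem_nhdsWithin] with d hd
    have hd : 0 < d := hd
    have k1 : eval ![d, t, w d] F = d ^ e * (d * eval ![d, t, w d] Q + eval ![t, w d] F0) :=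
      hdiv d ![t, w d]
    rw [(hw d hd).2.2, eq_comm, mul_eq_zero, or_iff_right (pow_ne_zero _ hd.ne')] at k1
    exact k1
  -- the limit is zero
  have hylim : Filter.Tendsto y (nhdsWithin 0 (Set.Ioi 0)) (nhds 0) := by
    rw [tendsto_order]
    constructor
    · intro η hη
      filter_upwards [self_mem_nhdsWithin] with t ht
      exact hη.trans_le (hy0 t ht)
    · intro η hη
      let K : Set (Fin n → ℝ) := {x | η / 2 * (1 + regSq x) ≤ 1 ∧ η / 2 ≤ f x ^ 2}
      have hKc : IsCompact K := by
        refine Metric.isCompact_of_isClosed_isBounded ?_ ?_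
        · exact (isClosed_le (continuous_const.mul (continuous_const.add hsc)) continuous_const).inter
            (isClosed_le continuous_const (hf.pow 2))
        · refine (Metric.isBounded_iff_subset_closedBall 0).2 ⟨1 + 2 / η, fun x hx => ?_⟩
          rw [mem_closedBall_zero_iff]
          have h1 := hx.1
          have h2 := regSq_le x
          have h3 : ‖x‖ ^ 2 ≤ 2 / η := by
            rw [le_div_iff₀ hη]; nlinarith
          nlinarith [sq_nonneg (‖x‖ - 1), norm_nonneg x]
      obtain ⟨c, hc, hcK⟩ : ∃ c > 0, ∀ x ∈ K, c ≤ eval x P := by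
        rcases K.eq_empty_or_nonempty with h | h
        · exact ⟨1, one_pos, by simp [h]⟩
        · obtain ⟨x1, hx1, hmin⟩ := hKc.exists_isMinOn h hPc.continuousOn
          refine ⟨eval x1 P, lt_of_le_of_ne (hP x1) fun h => ?_, fun x hx => hmin hx⟩
          have h2 := hx1.2
          rw [h0 x1 h.symm] at h2
          norm_num at h2
          linarith
      have : Set.Ioo 0 (c * (η / 2)) ∈ nhdsWithin (0 : ℝ) (Set.Ioi 0) :=
        Ioo_mem_nhdsGT (by positivity)
      filter_upwards [this] with t ht
      refine lt_of_le_of_lt (ciSup_le (c := η / 2) fun x => ?_) (by linarith)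
      by_contra! hcon
      have hs := regSq_nonneg x
      have hxK : x ∈ K := ⟨le_trans (by gcongr) (hY1 t ht.1 x), hcon.le.trans (hY2 t ht.1 x)⟩
      have h1 := hY3 t ht.1 x
      have h2 := hcK x hxK
      have h3 : η / 2 * c ≤ Y t x * eval x P := by gcongr; exact hYn t ht.1 x
      linarith [ht.2]
  obtain ⟨a, ha, C, hC⟩ : ∃ a : ℕ, a ≠ 0 ∧ ∃ C, ∀ᶠ t in nhdsWithin 0 (Set.Ioi 0), y t ^ a ≤ C * t := by
    obtain ⟨a, C, hC⟩ := reg_bound F0 hF0 y hy0 hylim hrel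
    refine ⟨a + 1, Nat.succ_ne_zero a, C, ?_⟩
    filter_upwards [hC, self_mem_nhdsWithin] with t h1 h2
    have h2 : 0 < t := h2
    exact (pow_le_pow_of_le_one (hy0 t h2) (ciSup_le (hYle1 t h2)) (Nat.le_succ a)).trans h1
  obtain ⟨t0, ht0, hsub⟩ := mem_nhdsGT_iff_exists_Ioo_subset.1 hC
  have ht0 : 0 < t0 := ht0
  refine ⟨2 * a, fun x0 => ?_⟩
  -- pointwise inequality
  have hpt : ∀ x, |f x| ^ (2 * a) ≤ ((2 * D x) ^ a * |C| + f x ^ (2 * a) / t0) * eval x P := by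
    intro x
    have e0 : |f x| ^ (2 * a) = (f x ^ 2) ^ a := by rw [pow_mul, sq_abs]
    have e1 : f x ^ (2 * a) = (f x ^ 2) ^ a := by rw [pow_mul]
    have hDx := hD x
    have hPx := hP x
    rw [e0, e1, add_mul]
    have n1 : 0 ≤ (2 * D x) ^ a * |C| * eval x P := by positivity
    have n2 : 0 ≤ (f x ^ 2) ^ a / t0 * eval x P := by positivity
    by_cases hbig : t0 ≤ eval x P
    · have : (f x ^ 2) ^ a ≤ (f x ^ 2) ^ a / t0 * eval x P := by
        rw [div_mul_eq_mul_div, le_div_iff₀ ht0]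
        gcongr
      linarith
    push Not at hbig
    by_cases hfx : f x = 0
    · have hz : (f x ^ 2) ^ a = 0 := by rw [hfx]; simp [ha]
      linarith
    have hPpos : 0 < eval x P := lt_of_le_of_ne hPx fun h => hfx (h0 x h.symm)
    have hf2 : 0 < f x ^ 2 := by positivity
    have hfD : f x ^ 2 ≤ D x := by
      have := regSq_nonneg x
      simp only [D]; nlinarith
    let t := eval x P * f x ^ 2 / D x
    have htpos : 0 < t := by simp only [t]; positivity
    have htle : t ≤ eval x P := by
      simp only [t]; rw [div_le_iff₀ (by positivity)]; gcongr
    have h1 : y t ^ a ≤ C * t := hsub ⟨htpos, htle.trans_lt hbig⟩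
    have hYt : Y t x = f x ^ 2 / (2 * D x) := by
      simp only [Y, t]
      congr 1
      field_simp
      ring
    have h2 : (f x ^ 2 / (2 * D x)) ^ a ≤ |C| * eval x P := by
      rw [← hYt]
      calc Y t x ^ a ≤ y t ^ a := pow_le_pow_left₀ (hYn t htpos x) (hYy t htpos x) a
        _ ≤ C * t := h1
        _ ≤ |C| * t := by gcongr; exact le_abs_self C
        _ ≤ _ := by gcongr
    rw [div_pow, div_le_iff₀ (by positivity)] at h2
    linarith
  refine ⟨((2 * D x0) ^ a * |C| + f x0 ^ (2 * a) / t0) + 1, ?_⟩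
  have hc : Continuous fun x => (2 * D x) ^ a * |C| + f x ^ (2 * a) / t0 := by fun_prop
  filter_upwards [(hc.tendsto x0).eventually_lt_const (lt_add_one _)] with x hx
  exact (hpt x).trans (by have := hP x; gcongr)

theorem reg_eval_contDiff {n : ℕ} (P : MvPolynomial (Fin n) ℝ) (k : ℕ) :
    ContDiff ℝ k (fun x : Fin n → ℝ => eval x P) := by
  induction P using MvPolynomial.induction_on with
  | C a => simpa using contDiff_const
  | add p q hp hq => simpa using hp.add hq
  | mul_X p i hp => simpa using hp.mul (contDiff_apply ℝ ℝ i)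

theorem reg_main {n k : ℕ} (P : MvPolynomial (Fin n) ℝ) (hP : ∀ x, 0 ≤ eval x P) (hP0 : P ≠ 0)
    (f : (Fin n → ℝ) → ℝ) (hf : IsRegulous n k f) (h0 : ∀ x, eval x P = 0 → f x = 0) :
    ∃ (M : ℕ) (g : (Fin n → ℝ) → ℝ), IsRegulous n k g ∧ ∀ x, f x ^ M = eval x P * g x := by
  obtain ⟨hfc, p, q, hq, hqf⟩ := hf
  obtain ⟨N, hN⟩ := reg_loj P p q hP hq f hfc.continuous hqf h0
  obtain ⟨M0, hM0⟩ := reg_contDiff f (fun x => eval x P) (reg_eval_contDiff P) N hP hN h0 k hfc 0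
  have key : ∀ x, f x ^ (M0 + 1) = eval x P * (f x ^ (M0 + 1) / eval x P ^ (0 + 1)) := by
    intro x
    by_cases hx : eval x P = 0
    · simp [hx, h0 x hx]
    · rw [zero_add, pow_one, mul_div_cancel₀ _ hx]
  refine ⟨M0 + 1, _, ⟨hM0 (M0 + 1) (Nat.le_succ _), p ^ (M0 + 1), q ^ (M0 + 1) * P,
    mul_ne_zero (pow_ne_zero _ hq) hP0, fun x => ?_⟩, key⟩
  rw [eval_mul, eval_pow, eval_pow, mul_assoc, ← key x, ← mul_pow, hqf]

/-- **Regulous functions, Théorème `radideal`**: let `J` be a real ideal of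
`ℝ[x₁,…,xₙ]` and let `ε : ℝ[x₁,…,xₙ] → R^k(ℝⁿ)` be the ring homomorphism sending a
polynomial to its evaluation function. Then the radical of the ideal of `R^k(ℝⁿ)`
generated by `ε(J)` is the ideal of `k`-regulous functions vanishing on
`Z(J) = {x | p(x) = 0 for all p ∈ J}`. -/
theorem radical_of_extended_real_ideal (n k : ℕ)
    (J : Ideal (MvPolynomial (Fin n) ℝ))
    (hJreal : ∀ (m : ℕ) (p : Fin m → MvPolynomial (Fin n) ℝ),
      (∑ i : Fin m, p i ^ 2) ∈ J → ∀ i : Fin m, p i ∈ J)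
    (ε : MvPolynomial (Fin n) ℝ →+* regulousRing n k)
    (hε : ∀ (p : MvPolynomial (Fin n) ℝ) (x : Fin n → ℝ),
      (ε p : (Fin n → ℝ) → ℝ) x = eval x p) :
    ((Ideal.map ε J).radical : Set (regulousRing n k)) =
      {f : regulousRing n k |
        ∀ x : Fin n → ℝ, (∀ p ∈ J, eval x p = 0) → (f : (Fin n → ℝ) → ℝ) x = 0} := by
  ext f
  simp only [SetLike.mem_coe, Set.mem_setOf_eq]
  constructor
  · rintro ⟨m, hm⟩ x hx
    let ev : regulousRing n k →+* ℝ := (Pi.evalRingHom (fun _ => ℝ) x).comp (regulousRing n k).subtype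
    have hle : Ideal.map ε J ≤ RingHom.ker ev := by
      rw [Ideal.map_le_iff_le_comap]
      intro p hp
      rw [Ideal.mem_comap, RingHom.mem_ker]
      exact (hε p x).trans (hx p hp)
    have h1 : ev (f ^ m) = 0 := hle hm
    rw [map_pow] at h1
    exact eq_zero_of_pow_eq_zero h1
  · intro h
    obtain ⟨s, hs⟩ : J.FG := IsNoetherian.noetherian J
    let P : MvPolynomial (Fin n) ℝ := ∑ p ∈ s, p ^ 2
    have hPe : ∀ x, eval x P = ∑ p ∈ s, eval x p ^ 2 := fun x => by simp [P]
    have hPJ : P ∈ J := Ideal.sum_mem _ fun p hp =>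
      Ideal.pow_mem_of_mem _ (hs ▸ Ideal.subset_span hp) 2 two_pos
    have hP : ∀ x, 0 ≤ eval x P := fun x => by
      rw [hPe]; exact Finset.sum_nonneg fun p _ => sq_nonneg _
    have h0 : ∀ x, eval x P = 0 → (f : (Fin n → ℝ) → ℝ) x = 0 := by
      intro x hx
      rw [hPe, Finset.sum_eq_zero_iff_of_nonneg fun p _ => sq_nonneg _] at hx
      refine h x fun p hp => ?_
      have hle : J ≤ RingHom.ker (eval x) := by
        rw [← hs, Ideal.span_le]
        intro r hr
        exact eq_zero_of_pow_eq_zero (hx r hr)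
      exact hle hp
    by_cases hP0 : P = 0
    · have : f = 0 := Subtype.ext (funext fun x => h0 x (by rw [hP0, map_zero]))
      rw [this]; exact zero_mem _
    · obtain ⟨M, g, hg, hfg⟩ := reg_main P hP hP0 f f.2 h0
      refine ⟨M, ?_⟩
      have : f ^ M = ε P * (⟨g, hg⟩ : regulousRing n k) := by
        refine Subtype.ext (funext fun x => ?_)
        have := hfg x
        rw [← hε P x] at this
        exact this
      rw [this]
      exact Ideal.mul_mem_right _ _ (Ideal.mem_map_of_mem ε hPJ)
end

section
/- Let n be a natural number, let f : ℝⁿ → ℝ be a regulous (i.e. 0-regulous) function, and let x ∈ ℝⁿ with f(x) = 0. Then there exists a positive integer N such that the function y ↦ f(y)^N is Fréchet differentiable at x with derivative equal to the zero linear map. -/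
open MvPolynomial

theorem fin_quot {R σ : Type*} [CommRing R] [Finite σ] (J : Ideal (MvPolynomial σ R)) (d : ℕ)
    (g : σ → MvPolynomial σ R) (hg : ∀ i, (g i).totalDegree < d)
    (hJ : ∀ i, X i ^ d - g i ∈ J) : Module.Finite R (MvPolynomial σ R ⧸ J) := by
  classical
  have := Fintype.ofFinite σ
  let B : Set (σ →₀ ℕ) := {s | ∀ i, s i < d}
  have hB : B.Finite := by
    refine (Set.finite_Iic (Finsupp.equivFunOnFinite.symm (fun _ : σ => d))).subset ?_
    intro s hs i
    simpa using (hs i).le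
  let mk := Ideal.Quotient.mkₐ R J
  let S := Submodule.span R ((fun s => mk (monomial s 1)) '' B)
  have key : ∀ m : ℕ, ∀ s : σ →₀ ℕ, s.degree = m → mk (monomial s 1) ∈ S := by
    intro m
    induction m using Nat.strong_induction_on with
    | _ m ih =>
    intro s hs
    by_cases h : s ∈ B
    · exact Submodule.subset_span ⟨s, h, rfl⟩
    · obtain ⟨i, hi⟩ : ∃ i, d ≤ s i := by simpa [B] using h
      obtain ⟨t, ht⟩ : ∃ t, s = t + Finsupp.single i d :=
        ⟨s - Finsupp.single i d, by rw [tsub_add_cancel_of_le (by simpa using hi)]⟩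
      have e1 : mk (monomial s 1) = mk (monomial t 1 * g i) := by
        rw [ht, ← sub_eq_zero, ← map_sub]
        refine Ideal.Quotient.eq_zero_iff_mem.2 ?_
        have : (monomial (t + Finsupp.single i d) (1 : R)) - monomial t 1 * g i
            = monomial t 1 * (X i ^ d - g i) := by
          rw [mul_sub, X_pow_eq_monomial, monomial_mul, one_mul]
        rw [this]
        exact J.mul_mem_left _ (hJ i)
      rw [e1, (g i).as_sum, Finset.mul_sum, map_sum]
      refine Submodule.sum_mem _ fun u hu => ?_
      have e2 : monomial t (1 : R) * monomial u (coeff u (g i))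
          = coeff u (g i) • monomial (t + u) 1 := by
        rw [monomial_mul, smul_monomial]; simp
      rw [e2, map_smul]
      refine Submodule.smul_mem _ _ (ih (t + u).degree ?_ _ rfl)
      have h1 := le_totalDegree hu
      have h2 := hg i
      have h3 : u.degree = u.sum fun _ e => e := rfl
      rw [← hs, ht, map_add, map_add, Finsupp.degree_single]
      omega
  refine ⟨?_⟩
  have : S = ⊤ := by
    rw [eq_top_iff]
    rintro y -
    obtain ⟨p, rfl⟩ := Ideal.Quotient.mk_surjective y
    change mk p ∈ S
    rw [p.as_sum, map_sum]
    refine Submodule.sum_mem _ fun u hu => ?_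
    have e2 : monomial u (coeff u p) = coeff u p • monomial u 1 := by
      rw [smul_monomial]; simp
    rw [e2, map_smul]
    exact Submodule.smul_mem _ _ (key _ _ rfl)
  rw [← this]
  exact Submodule.fg_span (hB.image _)

theorem totalDegree_pderiv_le' {R σ : Type*} [CommRing R] (i : σ) (L : MvPolynomial σ R) :
    (pderiv i L).totalDegree ≤ L.totalDegree := by
  classical
  conv_lhs => rw [L.as_sum, map_sum]
  refine totalDegree_finsetSum_le fun u hu => ?_
  rw [pderiv_monomial]
  refine (totalDegree_monomial_le _ _).trans (le_trans ?_ (le_totalDegree hu))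
  change (u - Finsupp.single i 1).degree ≤ u.degree
  exact Finsupp.degree_mono (tsub_le_self)

noncomputable def FF {R σ : Type*} [CommRing R] [Fintype σ] (c : R) (L : MvPolynomial σ R) (D : ℕ) :
    MvPolynomial σ R :=
  L + ∑ i, C c * X i ^ (2 * D)

theorem elim_crit {R σ : Type*} [CommRing R] [Fintype σ] (c : R) (L h : MvPolynomial σ R) (D : ℕ)
    (hD : L.totalDegree < D) (hc : c * ((2 * D : ℕ) : R) = 1) :
    ∃ P : Polynomial R, P.Monic ∧ ∀ (φ : R →+* ℝ) (w : σ → ℝ),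
      (∀ i, eval₂Hom φ w (pderiv i (FF c L D)) = 0) →
      P.eval₂ φ (eval₂Hom φ w h) = 0 := by
  classical
  let J : Ideal (MvPolynomial σ R) := Ideal.span (Set.range fun i => pderiv i (FF c L D))
  have hfin : Module.Finite R (MvPolynomial σ R ⧸ J) := by
    refine fin_quot J (2 * D - 1) (fun i => - pderiv i L) ?_ ?_
    · intro i
      rw [totalDegree_neg]
      have := totalDegree_pderiv_le' i L
      omega
    · intro i
      refine Ideal.subset_span ⟨i, ?_⟩
      simp only [FF, map_add, map_sum, sub_neg_eq_add]
      rw [Finset.sum_eq_single i, pderiv_C_mul, pderiv_pow, pderiv_X_self, mul_one, add_comm]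
      · have h2 : ((2 * D : ℕ) : MvPolynomial σ R) = C ((2 * D : ℕ) : R) := (map_natCast C _).symm
        rw [C_mul', h2, C_mul', smul_smul, hc, one_smul]
      · intro j _ hj
        rw [pderiv_C_mul, pderiv_pow, pderiv_X_of_ne hj]; simp
      · simp
  obtain ⟨P, hP, h0⟩ := IsIntegral.of_finite R (Ideal.Quotient.mk J h)
  refine ⟨P, hP, fun φ w hw => ?_⟩
  have hJ : ∀ a ∈ J, eval₂Hom φ w a = 0 := by
    intro a ha
    have : J ≤ RingHom.ker (eval₂Hom φ w) := by
      refine Ideal.span_le.2 ?_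
      rintro _ ⟨i, rfl⟩
      exact hw i
    exact this ha
  have h1 : P.eval₂ C h ∈ J := by
    rw [← Ideal.Quotient.eq_zero_iff_mem, Polynomial.hom_eval₂]
    exact h0
  have h2 := hJ _ h1
  rw [Polynomial.hom_eval₂] at h2
  have h3 : (eval₂Hom φ w).comp C = φ := by ext; simp
  rwa [h3] at h2

theorem hasDerivAt_upd {R σ : Type*} [CommRing R] [DecidableEq σ] (φ : R →+* ℝ) (w : σ → ℝ) (i : σ)
    (G : MvPolynomial σ R) (t : ℝ) :
    HasDerivAt (fun t => eval₂Hom φ (Function.update w i t) G)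
      (eval₂Hom φ (Function.update w i t) (pderiv i G)) t := by
  induction G using MvPolynomial.induction_on with
  | C a => simpa using hasDerivAt_const t _
  | add p q hp hq => simp only [map_add]; exact hp.add hq
  | mul_X p j hp =>
    have hX : HasDerivAt (fun t => eval₂Hom φ (Function.update w i t) (X j))
        (eval₂Hom φ (Function.update w i t) (pderiv i (X j))) t := by
      by_cases hj : j = i
      · subst hj
        simp only [eval₂Hom_X', Function.update_self, pderiv_X_self, map_one]
        exact hasDerivAt_id t
      · rw [pderiv_X_of_ne hj]
        simpa [hj] using hasDerivAt_const t _
    have := hp.mul hX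
    simp only [Derivation.leibniz, map_mul, map_add, smul_eq_mul]
    refine HasDerivAt.congr_deriv this ?_
    ring

theorem crit {R σ : Type*} [CommRing R] (φ : R →+* ℝ) (w : σ → ℝ) (G : MvPolynomial σ R)
    (hw : ∀ w', eval₂Hom φ w G ≤ eval₂Hom φ w' G) (i : σ) : eval₂Hom φ w (pderiv i G) = 0 := by
  classical
  have h := hasDerivAt_upd φ w i G (w i)
  have hm : IsLocalMin (fun t => eval₂Hom φ (Function.update w i t) G) (w i) := by
    refine Filter.Eventually.of_forall fun t => ?_
    simpa only [Function.update_eq_self] using hw _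
  have := hm.hasDerivAt_eq_zero h
  simpa only [Function.update_eq_self] using this

theorem cont_ev {R σ : Type*} [CommRing R] (φ : R →+* ℝ) (G : MvPolynomial σ R) :
    Continuous fun w => eval₂Hom φ w G := by
  have : (fun w => eval₂Hom φ w G) = fun w => eval w (map φ G) := by
    ext w; rw [eval_map]; rfl
  rw [this]; exact MvPolynomial.continuous_eval _

theorem exists_min {σ : Type*} [Fintype σ] [Nonempty σ] (G : (σ → ℝ) → ℝ) (hG : Continuous G)
    (c : ℝ) (hc : 0 < c) (D : ℕ) (hD : 0 < D)
    (h : ∀ w i, c * w i ^ (2 * D) ≤ G w) : ∃ w, ∀ w', G w ≤ G w' := by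
  refine hG.exists_forall_le' 0 ?_
  filter_upwards [(tendsto_norm_cocompact_atTop (E := σ → ℝ)).eventually_ge_atTop
    (max 1 (G 0 / c))] with w hw
  obtain ⟨i, hi⟩ : ∃ i, ‖w‖ = |w i| := by
    obtain ⟨i, hi⟩ := Finite.exists_max fun i => |w i|
    refine ⟨i, le_antisymm ?_ (norm_le_pi_norm w i)⟩
    exact (pi_norm_le_iff_of_nonneg (abs_nonneg _)).2 hi
  have h1 : 1 ≤ |w i| := hi ▸ (le_max_left _ _).trans hw
  have h2 : G 0 / c ≤ |w i| := hi ▸ (le_max_right _ _).trans hw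
  have h3 : |w i| ≤ w i ^ (2 * D) := by
    rw [← (even_two_mul D).pow_abs]
    exact le_self_pow₀ h1 (by omega)
  rw [div_le_iff₀ hc] at h2
  nlinarith [h w i]

theorem lim_lemma (P : Polynomial (Polynomial (Polynomial ℝ))) (hP : P ≠ 0) : ∃ P0 : Polynomial (Polynomial ℝ), P0 ≠ 0 ∧
    ∀ (e v : ℝ) (m s : ℕ → ℝ), Filter.Tendsto m Filter.atTop Filter.atTop →
      Filter.Tendsto s Filter.atTop (nhds v) →
      (∀ k, P.eval₂ (Polynomial.evalEvalRingHom e (m k)) (s k) = 0) →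
      P0.evalEval e v = 0 := by
  set Q := Polynomial.Bivariate.swap P with hQ
  have hQ0 : Q ≠ 0 := by simpa [hQ] using hP
  refine ⟨Q.leadingCoeff, by simpa using hQ0, ?_⟩
  intro e v m s hm hs h
  have key : ∀ m s, P.eval₂ (Polynomial.evalEvalRingHom e m) s
      = Q.eval₂ (Polynomial.evalEvalRingHom e s) m := by
    intro m s
    have : (Polynomial.eval₂RingHom (Polynomial.evalEvalRingHom e m) s)
      = (Polynomial.eval₂RingHom (Polynomial.evalEvalRingHom e s) m).comp
        (Polynomial.Bivariate.swap (R := Polynomial ℝ)).toRingHom := by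
      ext <;> simp [Polynomial.Bivariate.swap_apply]
    exact DFunLike.congr_fun this P
  have hc : ∀ j, Filter.Tendsto (fun k => (Q.coeff j).evalEval e (s k)) Filter.atTop
      (nhds ((Q.coeff j).evalEval e v)) := by
    intro j
    have : Continuous fun s => (Q.coeff j).evalEval e s := by
      have : (fun s => (Q.coeff j).evalEval e s) =
          fun s => ((Q.coeff j).map (Polynomial.evalRingHom e)).eval s := by
        ext s
        rw [← Polynomial.eval₂_evalRingHom, Polynomial.eval_map]
      rw [this]
      exact Polynomial.continuous _
    exact (this.tendsto v).comp hs
  have hlim : Filter.Tendsto (fun k => ∑ j ∈ Finset.range (Q.natDegree + 1),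
      (Q.coeff j).evalEval e (s k) * (m k ^ j / m k ^ Q.natDegree)) Filter.atTop
      (nhds (∑ j ∈ Finset.range (Q.natDegree + 1),
        (Q.coeff j).evalEval e v * (if j = Q.natDegree then 1 else 0))) := by
    refine tendsto_finsetSum _ fun j hj => (hc j).mul ?_
    split_ifs with hjd
    · subst hjd
      refine tendsto_const_nhds.congr' ?_
      filter_upwards [hm.eventually_gt_atTop 0] with k hk
      field_simp
    · have : j < Q.natDegree := by
        have := Finset.mem_range.1 hj
        omega
      exact (tendsto_pow_div_pow_atTop_zero this).comp hm
  have hz : ∀ k, ∑ j ∈ Finset.range (Q.natDegree + 1),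
      (Q.coeff j).evalEval e (s k) * (m k ^ j / m k ^ Q.natDegree) = 0 := by
    intro k
    have := h k
    rw [key, Polynomial.eval₂_eq_sum_range] at this
    simp only [← mul_div_assoc]
    rw [← Finset.sum_div]
    simp only [Polynomial.coe_evalEvalRingHom] at this
    rw [this, zero_div]
  simp only [hz] at hlim
  have := tendsto_nhds_unique hlim tendsto_const_nhds
  simpa using this

theorem loj2 (P0 : Polynomial (Polynomial ℝ)) (h0 : P0 ≠ 0) :
    ∃ (k : ℕ) (c δ : ℝ), 0 < c ∧ 0 < δ ∧ ∀ e v : ℝ, |e| < δ → 0 < v → v ≤ 1 →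
      P0.evalEval e v = 0 → |e| ^ k ≤ c * v := by
  obtain ⟨P1, hP1, hnd⟩ := Polynomial.exists_eq_pow_rootMultiplicity_mul_and_not_dvd P0 h0 0
  simp only [map_zero, sub_zero] at hP1 hnd
  rw [Polynomial.X_dvd_iff] at hnd
  obtain ⟨b, hb, hbd⟩ := Polynomial.exists_eq_pow_rootMultiplicity_mul_and_not_dvd _ hnd 0
  simp only [map_zero, sub_zero] at hb hbd
  set k := Polynomial.rootMultiplicity 0 (P1.coeff 0)
  rw [Polynomial.X_dvd_iff, Polynomial.coeff_zero_eq_eval_zero] at hbd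
  have hcont : Continuous fun z : ℝ × ℝ => P1.divX.evalEval z.1 z.2 := by
    have : (fun z : ℝ × ℝ => P1.divX.evalEval z.1 z.2) =
      fun z => ∑ i ∈ Finset.range (P1.divX.natDegree + 1), (P1.divX.coeff i).eval z.1 * z.2 ^ i := by
      ext z
      rw [← Polynomial.eval₂_evalRingHom, Polynomial.eval₂_eq_sum_range]; rfl
    rw [this]
    fun_prop
  obtain ⟨M, hM⟩ := (isCompact_Icc (a := ((-1, 0) : ℝ × ℝ)) (b := (1, 1))).exists_bound_of_continuousOn
    hcont.continuousOn
  have hbc : ∀ᶠ e in nhds (0 : ℝ), |b.eval 0| / 2 < |b.eval e| := by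
    have : Filter.Tendsto (fun e => |b.eval e|) (nhds 0) (nhds |b.eval 0|) :=
      (b.continuous.abs).tendsto 0
    exact this.eventually_const_lt (by have := abs_pos.2 hbd; linarith)
  obtain ⟨δ, hδ, hball⟩ := Metric.eventually_nhds_iff.1 hbc
  have hpos := abs_pos.2 hbd
  have hM0 : 0 ≤ |M| := abs_nonneg M
  refine ⟨k, (|M| + 1) / (|b.eval 0| / 2), min δ 1, by positivity, by positivity, ?_⟩
  intro e v he hv hv1 hz
  have he1 : |b.eval 0| / 2 < |b.eval e| :=
    hball (by simpa using he.trans_le (min_le_left _ _))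
  have he2 : |e| < 1 := he.trans_le (min_le_right _ _)
  rw [abs_lt] at he2
  have hz1 : P1.evalEval e v = 0 := by
    rw [hP1] at hz
    simp [Polynomial.evalEval_mul, Polynomial.evalEval_pow, hv.ne'] at hz
    exact hz
  have hz2 : P1.divX.evalEval e v * v + e ^ k * b.eval e = 0 := by
    rw [← P1.divX_mul_X_add, hb] at hz1
    simpa [Polynomial.evalEval_mul, Polynomial.evalEval_add, Polynomial.evalEval_C] using hz1
  have hMb := hM (e, v) ⟨⟨he2.1.le, hv.le⟩, ⟨he2.2.le, hv1⟩⟩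
  have h3 : |e| ^ k * |b.eval e| = |P1.divX.evalEval e v| * v := by
    rw [← abs_pow, ← abs_mul, ← abs_of_pos hv, ← abs_mul, ← abs_neg, abs_of_pos hv]
    congr 1; linarith
  rw [Real.norm_eq_abs] at hMb
  simp only at hMb
  have h4 : |e| ^ k * (|b.eval 0| / 2) ≤ (|M| + 1) * v := by
    calc |e| ^ k * (|b.eval 0| / 2) ≤ |e| ^ k * |b.eval e| := by gcongr
      _ = |P1.divX.evalEval e v| * v := h3
      _ ≤ (|M| + 1) * v := by
        gcongr; have := le_abs_self M; linarith
  rw [div_mul_eq_mul_div, le_div_iff₀ (by positivity)]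
  exact h4

theorem final (n : ℕ) (f : (Fin n → ℝ) → ℝ)
    (hcont : Continuous f) (q : MvPolynomial (Fin n) ℝ) (hq : q ≠ 0)
    (x : Fin n → ℝ) (hx : f x = 0) (P0 : Polynomial (Polynomial ℝ)) (h0 : P0 ≠ 0)
    (H : ∀ y, eval y q ≠ 0 → f y ≠ 0 → ∃ v, 0 < v ∧ v ≤ ∑ i, (y i - x i) ^ 2 ∧
      P0.evalEval (f y) v = 0) :
    ∃ N : ℕ, 0 < N ∧
      HasFDerivAt (fun y : Fin n → ℝ => f y ^ N) (0 : (Fin n → ℝ) →L[ℝ] ℝ) x := by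
  obtain ⟨k, c, δ, hc, hδ, hk⟩ := loj2 P0 h0
  refine ⟨k + 1, by omega, ?_⟩
  have hS : Continuous fun y : Fin n → ℝ => ∑ i, (y i - x i) ^ 2 := by fun_prop
  have hU : IsOpen {y | |f y| < min δ 1 ∧ ∑ i, (y i - x i) ^ 2 < 1} :=
    (isOpen_lt hcont.abs continuous_const).inter (isOpen_lt hS continuous_const)
  set U := {y | |f y| < min δ 1 ∧ ∑ i, (y i - x i) ^ 2 < 1}
  have hxU : x ∈ U := by
    refine ⟨?_, ?_⟩ <;> simp [hx, hδ]
  have hdense : Dense {y : Fin n → ℝ | eval y q ≠ 0} := by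
    intro y
    rw [Metric.mem_closure_iff]
    intro r hr
    by_contra! hcon
    apply hq
    refine MvPolynomial.funext_set (fun i => Set.Ioo (y i - r) (y i + r)) (fun i => Set.Ioo_infinite (by linarith)) ?_
    intro z hz
    by_contra hne
    have := hcon z (by simpa using hne)
    rw [← not_lt] at this
    apply this
    rw [dist_pi_lt_iff hr]
    intro i
    have := hz i trivial
    rw [Real.dist_eq, abs_lt]
    constructor <;> linarith [this.1, this.2]
  have hb1 : ∀ y ∈ U, eval y q ≠ 0 → |f y| ^ (k + 1) ≤ c * ∑ i, (y i - x i) ^ 2 := by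
    intro y hy hqy
    by_cases hf : f y = 0
    · rw [hf]
      simp; positivity
    · obtain ⟨v, hv, hv1, hv2⟩ := H y hqy hf
      have h1 := hk (f y) v (hy.1.trans_le (min_le_left _ _)) hv (hv1.trans hy.2.le) hv2
      have h2 : |f y| ≤ 1 := (hy.1.trans_le (min_le_right _ _)).le
      calc |f y| ^ (k + 1) ≤ |f y| ^ k := pow_le_pow_of_le_one (abs_nonneg _) h2 (by omega)
        _ ≤ c * v := h1
        _ ≤ _ := by gcongr
  have hb2 : ∀ y ∈ U, |f y| ^ (k + 1) ≤ c * ∑ i, (y i - x i) ^ 2 := by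
    intro y hy
    have hcl : y ∈ closure (U ∩ {y : Fin n → ℝ | eval y q ≠ 0}) :=
      hdense.open_subset_closure_inter hU hy
    have hclosed : IsClosed {y | |f y| ^ (k + 1) ≤ c * ∑ i, (y i - x i) ^ 2} :=
      isClosed_le (by fun_prop) (by fun_prop)
    exact hclosed.closure_subset_iff.2 (fun z hz => hb1 z hz.1 hz.2) hcl
  refine Asymptotics.IsBigO.hasFDerivAt (n := 2) ?_ (by norm_num)
  refine Asymptotics.IsBigO.of_bound (c * n) ?_
  filter_upwards [hU.mem_nhds hxU] with y hy
  rw [norm_pow, Real.norm_eq_abs, norm_pow, norm_norm]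
  refine (hb2 y hy).trans ?_
  rw [mul_assoc]
  gcongr
  calc ∑ i, (y i - x i) ^ 2 ≤ ∑ i : Fin n, ‖y - x‖ ^ 2 := by
        refine Finset.sum_le_sum fun i _ => ?_
        have := norm_le_pi_norm (y - x) i
        rw [← sq_abs]
        gcongr
        exact this
    _ = _ := by simp

theorem regulous_power_differentiable (n : ℕ) (f : (Fin n → ℝ) → ℝ)
    (hcont : Continuous f)
    (hrat : ∃ p q : MvPolynomial (Fin n) ℝ, q ≠ 0 ∧
      ∀ y : Fin n → ℝ, eval y q * f y = eval y p)
    (x : Fin n → ℝ) (hx : f x = 0) :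
    ∃ N : ℕ, 0 < N ∧
      HasFDerivAt (fun y : Fin n → ℝ => f y ^ N) (0 : (Fin n → ℝ) →L[ℝ] ℝ) x := by
  obtain ⟨p, q, hq, hpq⟩ := hrat
  let base : ℝ →+* Polynomial (Polynomial ℝ) := Polynomial.C.comp Polynomial.C
  let pp : MvPolynomial (Option (Fin n)) (Polynomial (Polynomial ℝ)) := rename some (map base p)
  let qq : MvPolynomial (Option (Fin n)) (Polynomial (Polynomial ℝ)) := rename some (map base q)
  let h : MvPolynomial (Option (Fin n)) (Polynomial (Polynomial ℝ)) :=
    ∑ i, (X (some i) - C (base (x i))) ^ 2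
  let K : MvPolynomial (Option (Fin n)) (Polynomial (Polynomial ℝ)) :=
    (pp * X none - C (Polynomial.C (Polynomial.X : Polynomial ℝ))) ^ 2 + (qq * X none - 1) ^ 2
  let L : MvPolynomial (Option (Fin n)) (Polynomial (Polynomial ℝ)) :=
    C Polynomial.X * h + C (Polynomial.X ^ 2) * K
  obtain ⟨D, hD⟩ : ∃ D, L.totalDegree < D := ⟨_, Nat.lt_succ_self _⟩
  have hD0 : 0 < D := by omega
  have hDR : (0 : ℝ) < ((2 * D : ℕ) : ℝ) := by
    have : 0 < 2 * D := by omega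
    exact_mod_cast this
  let c : ℝ := 1 / ((2 * D : ℕ) : ℝ)
  have hc : 0 < c := by positivity
  have hcD : base c * ((2 * D : ℕ) : Polynomial (Polynomial ℝ)) = 1 := by
    have : c * ((2 * D : ℕ) : ℝ) = 1 := by
      simp only [c]; field_simp
    rw [← map_natCast base, ← map_mul, this, map_one]
  obtain ⟨P, hP, hPz⟩ := elim_crit (base c) L h D hD hcD
  obtain ⟨P0, hP0, hlim⟩ := lim_lemma P hP.ne_zero
  refine final n f hcont q hq x hx P0 hP0 ?_
  intro y hqy hfy
  set e := f y with he
  let φ : ℝ → (Polynomial (Polynomial ℝ) →+* ℝ) := fun m => Polynomial.evalEvalRingHom e m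
  have hbase : ∀ m, (φ m).comp base = RingHom.id ℝ := by
    intro m; ext a; simp [φ, base]
  have hbase' : ∀ m a, φ m (base a) = a := fun m a => DFunLike.congr_fun (hbase m) a
  have evr : ∀ m w (r : MvPolynomial (Fin n) ℝ),
      eval₂Hom (φ m) w (rename some (map base r)) = eval (fun i => w (some i)) r := by
    intro m w r
    rw [coe_eval₂Hom, eval₂_rename, eval₂_map, hbase]
    rfl
  have evh : ∀ m w, eval₂Hom (φ m) w h = ∑ i, (w (some i) - x i) ^ 2 := by
    intro m w
    simp only [h, map_sum, map_pow, map_sub, eval₂Hom_X', eval₂Hom_C, hbase']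
  let KK : (Option (Fin n) → ℝ) → ℝ := fun w =>
    (eval (fun i => w (some i)) p * w none - e) ^ 2 +
      (eval (fun i => w (some i)) q * w none - 1) ^ 2
  have evK : ∀ m w, eval₂Hom (φ m) w K = KK w := by
    intro m w
    simp only [K, KK, pp, qq, map_add, map_mul, map_pow, map_sub, map_one, evr, eval₂Hom_X',
      eval₂Hom_C]
    simp [φ]
  have evF : ∀ m w, eval₂Hom (φ m) w (FF (base c) L D) =
      m * ∑ i, (w (some i) - x i) ^ 2 + m ^ 2 * KK w + ∑ i, c * w i ^ (2 * D) := by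
    intro m w
    simp only [FF, L, map_add, map_mul, evh, evK, map_sum, map_pow, eval₂Hom_X', eval₂Hom_C, hbase']
    simp [φ]
  have hKK : ∀ w, 0 ≤ KK w := fun w => by positivity
  have hev : ∀ w : Option (Fin n) → ℝ, ∀ i, 0 ≤ c * w i ^ (2 * D) := fun w i =>
    mul_nonneg hc.le ((even_two_mul D).pow_nonneg _)
  have hmin : ∀ k : ℕ, ∃ w, ∀ w', eval₂Hom (φ (k + 1)) w (FF (base c) L D) ≤
      eval₂Hom (φ (k + 1)) w' (FF (base c) L D) := by
    intro k
    refine exists_min (fun w => eval₂Hom (φ (k + 1)) w (FF (base c) L D)) (cont_ev _ _) c hc D hD0 ?_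
    intro w i
    simp only [evF]
    have h1 := Finset.single_le_sum (f := fun i => c * w i ^ (2 * D))
      (fun i _ => hev w i) (Finset.mem_univ i)
    have h2 : 0 ≤ ((k : ℝ) + 1) * ∑ i, (w (some i) - x i) ^ 2 := by positivity
    have h3 := mul_nonneg (sq_nonneg ((k : ℝ) + 1)) (hKK w)
    linarith
  choose W hW using hmin
  have hzero : ∀ k : ℕ, P.eval₂ (φ (k + 1)) (∑ i, (W k (some i) - x i) ^ 2) = 0 := by
    intro k
    rw [← evh ((k : ℝ) + 1)]
    exact hPz _ _ fun i => crit _ _ _ (hW k) i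
  let w0 : Option (Fin n) → ℝ := fun o => o.elim (eval y q)⁻¹ y
  have hw0 : KK w0 = 0 := by
    simp only [KK, w0, Option.elim]
    rw [← hpq y, mul_inv_cancel₀ hqy, mul_right_comm, mul_inv_cancel₀ hqy]
    simp [he]
  set S0 := ∑ i, (y i - x i) ^ 2 with hS0
  set T0 := ∑ i, c * w0 i ^ (2 * D) with hT0
  have hT0' : 0 ≤ T0 := Finset.sum_nonneg fun i _ => hev w0 i
  have hS0' : 0 ≤ S0 := by positivity
  have hcmp : ∀ k : ℕ, ((k : ℝ) + 1) * ∑ i, (W k (some i) - x i) ^ 2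
      + ((k : ℝ) + 1) ^ 2 * KK (W k) ≤ ((k : ℝ) + 1) * S0 + T0 := by
    intro k
    have h1 := hW k w0
    rw [evF, evF, hw0] at h1
    have h2 : 0 ≤ ∑ i, c * W k i ^ (2 * D) := Finset.sum_nonneg fun i _ => hev _ i
    have h3 : ∑ i, (w0 (some i) - x i) ^ 2 = S0 := rfl
    rw [h3] at h1
    linarith
  let s : ℕ → ℝ := fun k => ∑ i, (W k (some i) - x i) ^ 2
  have hs0 : ∀ k, 0 ≤ s k := fun k => by positivity
  have hs1 : ∀ k : ℕ, s k ≤ S0 + T0 * (1 / ((k : ℝ) + 1)) := by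
    intro k
    have h1 := hcmp k
    have h2 := mul_nonneg (sq_nonneg ((k : ℝ) + 1)) (hKK (W k))
    have hk : (0 : ℝ) < k + 1 := by positivity
    have h3 : ((k : ℝ) + 1) * s k ≤ ((k : ℝ) + 1) * (S0 + T0 * (1 / ((k : ℝ) + 1))) := by
      have : ((k : ℝ) + 1) * (S0 + T0 * (1 / ((k : ℝ) + 1))) = ((k : ℝ) + 1) * S0 + T0 := by
        field_simp
      rw [this]
      simp only [s]
      linarith
    exact le_of_mul_le_mul_left h3 hk
  have hK1 : ∀ k : ℕ, KK (W k) ≤ (S0 + T0) * (1 / ((k : ℝ) + 1)) := by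
    intro k
    have h1 := hcmp k
    have hk : (1 : ℝ) ≤ k + 1 := by
      have : (0 : ℝ) ≤ k := by positivity
      linarith
    have hk' : (0 : ℝ) < k + 1 := by linarith
    have h2 := mul_nonneg hk'.le (hs0 k)
    have h3 : ((k : ℝ) + 1) ^ 2 * KK (W k) ≤ ((k : ℝ) + 1) * (S0 + T0) := by
      simp only [s] at h2
      nlinarith
    have h4 : ((k : ℝ) + 1) * KK (W k) ≤ S0 + T0 := by
      refine le_of_mul_le_mul_left ?_ hk'
      linarith
    rw [mul_one_div, le_div_iff₀ hk']
    linarith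
  have hone : Filter.Tendsto (fun k : ℕ => 1 / ((k : ℝ) + 1)) Filter.atTop (nhds 0) :=
    tendsto_one_div_add_atTop_nhds_zero_nat
  have hKlim : Filter.Tendsto (fun k => KK (W k)) Filter.atTop (nhds 0) := by
    refine squeeze_zero (fun k => hKK _) hK1 ?_
    simpa using hone.const_mul (S0 + T0)
  have hsC : ∀ k, s k ∈ Set.Icc 0 (S0 + T0) := by
    intro k
    refine ⟨hs0 k, (hs1 k).trans ?_⟩
    have : 1 / ((k : ℝ) + 1) ≤ 1 := by
      rw [div_le_one (by positivity)]
      have : (0 : ℝ) ≤ k := by positivity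
      linarith
    nlinarith
  obtain ⟨v, hv, g, hg, hgv⟩ := isCompact_Icc.tendsto_subseq hsC
  refine ⟨v, ?_, ?_, ?_⟩
  · refine lt_of_le_of_ne hv.1 fun hv0 => hfy ?_
    rw [← hv0] at hgv
    have hA : Filter.Tendsto (fun k => KK (W (g k))) Filter.atTop (nhds 0) :=
      hKlim.comp hg.tendsto_atTop
    have sqlim : ∀ a : ℕ → ℝ, (∀ k, a k ^ 2 ≤ KK (W (g k))) →
        Filter.Tendsto a Filter.atTop (nhds 0) := by
      intro a ha
      have : Filter.Tendsto (fun k => a k ^ 2) Filter.atTop (nhds 0) :=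
        squeeze_zero (fun k => sq_nonneg _) ha hA
      have h2 := this.sqrt
      simp only [Real.sqrt_sq_eq_abs, Real.sqrt_zero] at h2
      exact (tendsto_zero_iff_abs_tendsto_zero _).2 h2
    have hp1 := sqlim (fun k => eval (fun i => W (g k) (some i)) p * W (g k) none - e)
      (fun k => by simp only [KK]; exact le_add_of_nonneg_right (sq_nonneg _))
    have hq1 := sqlim (fun k => eval (fun i => W (g k) (some i)) q * W (g k) none - 1)
      (fun k => by simp only [KK]; exact le_add_of_nonneg_left (sq_nonneg _))
    have hy1 : Filter.Tendsto (fun k => (fun i => W (g k) (some i))) Filter.atTop (nhds x) := by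
      rw [tendsto_pi_nhds]
      intro i
      have : Filter.Tendsto (fun k => (W (g k) (some i) - x i) ^ 2) Filter.atTop (nhds 0) := by
        refine squeeze_zero (fun k => sq_nonneg _) (fun k => ?_) hgv
        exact Finset.single_le_sum (f := fun i => (W (g k) (some i) - x i) ^ 2)
          (fun i _ => sq_nonneg _) (Finset.mem_univ i)
      have h2 := this.sqrt
      simp only [Real.sqrt_sq_eq_abs, Real.sqrt_zero] at h2
      have h3 := (tendsto_zero_iff_abs_tendsto_zero _).2 h2
      simpa using h3.add_const (x i)
    have hf1 := (hcont.tendsto x).comp hy1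
    rw [hx] at hf1
    have h5 := (hq1.add_const 1).mul hf1
    have h6 := hp1.add_const e
    simp only [sub_add_cancel, zero_add, mul_zero] at h5 h6
    refine tendsto_nhds_unique h6 (h5.congr fun k => ?_)
    simp only [Function.comp]
    rw [← hpq]; ring
  · have h1 : Filter.Tendsto (fun k : ℕ => S0 + T0 * (1 / ((k : ℝ) + 1))) Filter.atTop
        (nhds S0) := by
      simpa using (hone.const_mul T0).const_add S0
    exact le_of_tendsto_of_tendsto' hgv (h1.comp hg.tendsto_atTop) fun k => hs1 (g k)
  · refine hlim e v (fun k => ((g k : ℕ) : ℝ) + 1) (s ∘ g) ?_ hgv fun k => hzero (g k)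
    exact Filter.tendsto_atTop_add_const_right _ _
      (tendsto_natCast_atTop_atTop.comp hg.tendsto_atTop)
end
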